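/- arXiv:math-ph/0703083 — 6 statements merged into one kernel-verified Lean document; each statement's English description precedes it below -/
import Mathlib

section
/- Let ν > 1/2 and 1 ≤ a < 2 with ν ≠ a. Let (φ_n) be a sequence of real-valued smooth functions on (0,∞), each with compact support contained in (0,∞), such that the following four sequences are Cauchy in L²(0,∞): (φ_n), (Aφ_n) where (Aφ)(x) = −φ''(x) + ((ν²−1/4)/x² + x²)·φ(x), (x ↦ x^{−a}·φ_n(x)), and (x ↦ x^{1−a}·φ_n'(x)). Then the sequences (x ↦ x^{−1−a/2}·φ_n(x)) and (x ↦ x^{−a/2}·φ_n'(x)) are also Cauchy in L²(0,∞). -/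
open MeasureTheory Set

/-- A sequence of real functions is Cauchy in `L²(0,∞)`. -/
def CauchyInL2 (f : ℕ → ℝ → ℝ) : Prop :=
  ∀ ε : ENNReal, 0 < ε → ∃ N : ℕ, ∀ m ≥ N, ∀ n ≥ N,
    eLpNorm (fun x => f m x - f n x) 2 (volume.restrict (Ioi (0:ℝ))) < ε

open Filter Topology

/-!
Write `P = ∫ x ^ (p - 2) u²` and `D = ∫ x ^ p u'²` for a test function `u`. Pairing `A u` with
`x ^ p u` and, as in the virial identity, with `x ^ (p + 1) u'` gives two linear equations in `P`
and `D`, whose determinant is `p (c + (1 - p²) / 4)` up to sign, where `c = ν² - 1/4`. For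
`-2 < p ≤ -1` every other term in them is at most `ε (P + D)` plus a multiple of `‖u‖² + ‖A u‖²`:
`x ^ q ≤ ε x ^ p + K x ^ r` on `(0, ∞)` when `p < q ≤ r`, and pairing `A u` with `u` bounds
`‖u'‖² + ‖x u‖²` in the same sense. So unless the determinant vanishes, the graph norm of `A`
controls `P + D`. The exponent `-a` may be exceptional, but some nearby `p < -a` is not, and the
same interpolation goes up from `p` to `-a`. Applied to `φ_m - φ_n`, this is the claim.
-/

section TestFunctions

/-- `f` is a test function of class `C^n` on the open half-line: it is `n` times continuously
differentiable and has compact support inside `(0, ∞)`. -/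
structure IsTestFunction (n : WithTop ℕ∞) (f : ℝ → ℝ) : Prop where
  contDiff : ContDiff ℝ n f
  hasCompactSupport : HasCompactSupport f
  tsupport_subset : tsupport f ⊆ Ioi 0

namespace IsTestFunction

variable {m n : WithTop ℕ∞} {f g : ℝ → ℝ}

lemma of_le (hf : IsTestFunction n f) (hmn : m ≤ n) : IsTestFunction m f :=
  ⟨hf.contDiff.of_le hmn, hf.hasCompactSupport, hf.tsupport_subset⟩

lemma sub (hf : IsTestFunction n f) (hg : IsTestFunction n g) : IsTestFunction n (f - g) :=
  ⟨hf.contDiff.sub hg.contDiff, hf.hasCompactSupport.sub hg.hasCompactSupport,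
    (tsupport_sub f g).trans (union_subset hf.tsupport_subset hg.tsupport_subset)⟩

lemma contDiffOn_mul (hf : IsTestFunction n f) (hg : ContDiffOn ℝ n g (Ioi 0)) :
    IsTestFunction n (fun x => g x * f x) where
  contDiff := contDiff_iff_contDiffAt.2 fun x => by
    by_cases hx : x ∈ tsupport f
    · exact (hg.contDiffAt (Ioi_mem_nhds (hf.tsupport_subset hx))).mul hf.contDiff.contDiffAt
    · refine contDiffAt_const (c := 0) |>.congr_of_eventuallyEq ?_
      filter_upwards [notMem_tsupport_iff_eventuallyEq.1 hx] with y hy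
      simp only [hy, Pi.zero_apply, mul_zero]
  hasCompactSupport := hf.hasCompactSupport.mul_left
  tsupport_subset := (tsupport_mul_subset_right (f := g)).trans hf.tsupport_subset

lemma mul (hf : IsTestFunction n f) (hg : IsTestFunction n g) :
    IsTestFunction n (fun x => f x * g x) :=
  hg.contDiffOn_mul hf.contDiff.contDiffOn

lemma rpow_mul (hf : IsTestFunction n f) (p : ℝ) : IsTestFunction n (fun x => x ^ p * f x) :=
  hf.contDiffOn_mul fun _ hx =>
    (Real.contDiffAt_rpow_const_of_ne (ne_of_gt hx)).contDiffWithinAt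

lemma deriv (hf : IsTestFunction (n + 1) f) : IsTestFunction n (deriv f) :=
  ⟨(contDiff_succ_iff_deriv.1 hf.contDiff).2.2, hf.hasCompactSupport.deriv,
    tsupport_deriv_subset.trans hf.tsupport_subset⟩

lemma deriv_two (hf : IsTestFunction 2 f) : IsTestFunction 1 (_root_.deriv f) :=
  IsTestFunction.deriv (by rwa [one_add_one_eq_two])

lemma hasDerivAt (hf : IsTestFunction 1 f) (x : ℝ) : HasDerivAt f (_root_.deriv f x) x :=
  (hf.contDiff.differentiable one_ne_zero x).hasDerivAt

lemma deriv_sub (hf : IsTestFunction 1 f) (hg : IsTestFunction 1 g) :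
    _root_.deriv (f - g) = _root_.deriv f - _root_.deriv g :=
  funext fun x => ((hf.hasDerivAt x).sub (hg.hasDerivAt x)).deriv

lemma integrable (hf : IsTestFunction 0 f) : Integrable f :=
  hf.contDiff.continuous.integrable_of_hasCompactSupport hf.hasCompactSupport

lemma setIntegral_deriv_eq_zero (hf : IsTestFunction 1 f) :
    ∫ x in Ioi (0 : ℝ), _root_.deriv f x = 0 := by
  have hderiv : IsTestFunction 0 (_root_.deriv f) := hf.deriv
  rw [setIntegral_eq_integral_of_forall_compl_eq_zero fun x hx =>
    image_eq_zero_of_notMem_tsupport fun h => hx (hderiv.tsupport_subset h)]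
  exact integral_eq_zero_of_hasDerivAt_of_integrable hf.hasDerivAt hderiv.integrable
    (hf.of_le zero_le_one).integrable

end IsTestFunction

end TestFunctions

section WeightedInner

/-- The weighted `L²` pairing `∫₀^∞ x ^ p f(x) g(x) dx`, in which all the integrals of the argument
are expressed; `weightedInner p f f` is the squared norm of `x ^ (p / 2) f` in `L²(0, ∞)`. -/
noncomputable def weightedInner (p : ℝ) (f g : ℝ → ℝ) : ℝ :=
  ∫ x in Ioi (0 : ℝ), x ^ p * (f x * g x)

variable {f g : ℝ → ℝ}

lemma weightedInner_comm (p : ℝ) (f g : ℝ → ℝ) : weightedInner p f g = weightedInner p g f := by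
  simp only [weightedInner, mul_comm (f _)]

lemma weightedInner_self_nonneg (p : ℝ) (f : ℝ → ℝ) : 0 ≤ weightedInner p f f :=
  setIntegral_nonneg measurableSet_Ioi fun x hx =>
    mul_nonneg (Real.rpow_nonneg (le_of_lt hx) p) (mul_self_nonneg (f x))

lemma integrableOn_rpow_mul_mul (hf : IsTestFunction 0 f) (hg : IsTestFunction 0 g) (p : ℝ) :
    IntegrableOn (fun x => x ^ p * (f x * g x)) (Ioi 0) :=
  ((hf.mul hg).rpow_mul p).integrable.integrableOn

lemma abs_weightedInner_le (hf : IsTestFunction 0 f) (hg : IsTestFunction 0 g) (p q : ℝ) :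
    |weightedInner (p + q) f g| ≤ weightedInner (2 * p) f f + weightedInner (2 * q) g g := by
  have hff := integrableOn_rpow_mul_mul hf hf (2 * p)
  have hgg := integrableOn_rpow_mul_mul hg hg (2 * q)
  unfold weightedInner
  rw [← integral_add hff hgg, ← Real.norm_eq_abs]
  refine norm_integral_le_of_norm_le (hff.add hgg) ?_
  refine (ae_restrict_iff' measurableSet_Ioi).2 (.of_forall fun x (hx : 0 < x) => ?_)
  rw [Real.norm_eq_abs, Real.rpow_add hx, two_mul, two_mul, Real.rpow_add hx, Real.rpow_add hx,
    abs_le]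
  constructor <;> nlinarith [sq_nonneg (x ^ p * f x + x ^ q * g x),
    sq_nonneg (x ^ p * f x - x ^ q * g x), sq_nonneg (x ^ p * f x), sq_nonneg (x ^ q * g x)]

lemma weightedInner_deriv_right (hf : IsTestFunction 1 f) (hg : IsTestFunction 1 g) (p : ℝ) :
    weightedInner p f (deriv g) =
      -weightedInner p (deriv f) g - p * weightedInner (p - 1) f g := by
  have hf₀ := hf.of_le zero_le_one
  have hg₀ := hg.of_le zero_le_one
  have hfg' := integrableOn_rpow_mul_mul hf₀ (hg.deriv (n := 0)) p
  have hf'g := integrableOn_rpow_mul_mul (hf.deriv (n := 0)) hg₀ p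
  have hfg := integrableOn_rpow_mul_mul hf₀ hg₀ (p - 1)
  have product_rule : ∀ x ∈ Ioi (0 : ℝ), deriv (fun x => x ^ p * (f x * g x)) x =
      x ^ p * (f x * deriv g x) + x ^ p * (deriv f x * g x) +
        p * (x ^ (p - 1) * (f x * g x)) := fun x hx => by
    have h := (Real.hasDerivAt_rpow_const (p := p) (Or.inl (ne_of_gt hx))).mul
      ((hf.hasDerivAt x).mul (hg.hasDerivAt x))
    refine h.deriv.trans ?_
    simp only [Pi.mul_apply]
    ring
  have h := ((hf.mul hg).rpow_mul p).setIntegral_deriv_eq_zero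
  rw [setIntegral_congr_fun measurableSet_Ioi product_rule,
    integral_add (hfg'.fun_add hf'g) (hfg.const_mul p), integral_add hfg' hf'g,
    integral_const_mul] at h
  unfold weightedInner
  linarith

lemma weightedInner_self_deriv (hf : IsTestFunction 1 f) (p : ℝ) :
    weightedInner p f (deriv f) = -(p / 2) * weightedInner (p - 1) f f := by
  have h := weightedInner_deriv_right hf hf p
  rw [weightedInner_comm p (deriv f)] at h
  linarith

end WeightedInner

section Oscillator

/-- The Schrödinger operator `u ↦ -u'' + (c / x² + x²) u` with inverse-square coupling `c`; the
paper's operator `A` is the case `c = ν² - 1/4`. -/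
noncomputable def singularOscillator (c : ℝ) (u : ℝ → ℝ) (x : ℝ) : ℝ :=
  -(deriv (deriv u) x) + (c / x ^ 2 + x ^ 2) * u x

variable {c p : ℝ} {u v : ℝ → ℝ}

lemma IsTestFunction.singularOscillator (hu : IsTestFunction 2 u) (c : ℝ) :
    IsTestFunction 0 (singularOscillator c u) := by
  have hV : ContDiffOn ℝ 0 (fun x : ℝ => c / x ^ 2 + x ^ 2) (Ioi 0) := fun x hx =>
    ((contDiffAt_const.div (contDiffAt_id.pow 2) (pow_ne_zero 2 (ne_of_gt hx))).add
      (contDiffAt_id.pow 2)).contDiffWithinAt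
  have hu'' : IsTestFunction 0 (_root_.deriv (_root_.deriv u)) := hu.deriv_two.deriv
  convert ((hu.of_le zero_le_two).contDiffOn_mul hV).sub hu'' using 1
  funext x
  simp only [_root_.singularOscillator, Pi.sub_apply]
  ring

lemma singularOscillator_sub (hu : IsTestFunction 2 u) (hv : IsTestFunction 2 v) (c : ℝ) :
    singularOscillator c (u - v) = singularOscillator c u - singularOscillator c v := by
  funext x
  simp only [singularOscillator, (hu.of_le one_le_two).deriv_sub (hv.of_le one_le_two),
    hu.deriv_two.deriv_sub hv.deriv_two, Pi.sub_apply]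
  ring

lemma weightedInner_singularOscillator_left (hu : IsTestFunction 2 u) (hv : IsTestFunction 0 v)
    (c p : ℝ) : weightedInner p (singularOscillator c u) v =
      -weightedInner p (deriv (deriv u)) v + c * weightedInner (p - 2) u v +
        weightedInner (p + 2) u v := by
  have hu₀ := hu.of_le zero_le_two
  have hu''v := integrableOn_rpow_mul_mul (hu.deriv_two.deriv (n := 0)) hv p
  have huv_sub := integrableOn_rpow_mul_mul hu₀ hv (p - 2)
  have huv_add := integrableOn_rpow_mul_mul hu₀ hv (p + 2)
  unfold weightedInner
  rw [← integral_neg, ← integral_const_mul, ← integral_add hu''v.fun_neg (huv_sub.const_mul c),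
    ← integral_add (hu''v.fun_neg.fun_add (huv_sub.const_mul c)) huv_add]
  refine setIntegral_congr_fun measurableSet_Ioi fun x (hx : 0 < x) => ?_
  simp only [singularOscillator, Real.rpow_sub hx, Real.rpow_add hx, Real.rpow_two]
  ring

lemma weightedInner_singularOscillator_self (hu : IsTestFunction 2 u) (c p : ℝ) :
    weightedInner p (singularOscillator c u) u =
      weightedInner p (deriv u) (deriv u) + (c - p * (p - 1) / 2) * weightedInner (p - 2) u u +
        weightedInner (p + 2) u u := by
  have hu₁ := hu.of_le one_le_two
  have h := weightedInner_singularOscillator_left hu (hu.of_le zero_le_two) c p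
  have hu'' := weightedInner_deriv_right hu₁ hu.deriv_two p
  have huu' := weightedInner_self_deriv hu₁ (p - 1)
  rw [sub_sub, one_add_one_eq_two] at huu'
  rw [weightedInner_comm p (deriv (deriv u)), hu'', huu'] at h
  linarith

/-- The virial (Pohozaev) identity: the pairing is with the dilation generator `x u'`, weighted
by `x ^ p`. -/
lemma weightedInner_singularOscillator_deriv (hu : IsTestFunction 2 u) (c p : ℝ) :
    weightedInner (p + 1) (singularOscillator c u) (deriv u) =
      (p + 1) / 2 * weightedInner p (deriv u) (deriv u) +
        c * (1 - p) / 2 * weightedInner (p - 2) u u -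
          (p + 3) / 2 * weightedInner (p + 2) u u := by
  have hu₁ := hu.of_le one_le_two
  have h := weightedInner_singularOscillator_left hu (hu.deriv_two.of_le zero_le_one) c (p + 1)
  have hu'u'' := weightedInner_self_deriv hu.deriv_two (p + 1)
  have huu'_neg := weightedInner_self_deriv hu₁ (p + 1 - 2)
  have huu'_pos := weightedInner_self_deriv hu₁ (p + 1 + 2)
  rw [show p + 1 - 1 = p by ring] at hu'u''
  rw [show p + 1 - 2 - 1 = p - 2 by ring] at huu'_neg
  rw [show p + 1 + 2 - 1 = p + 2 by ring] at huu'_pos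
  rw [weightedInner_comm (p + 1) (deriv (deriv u)), hu'u'', huu'_neg, huu'_pos] at h
  linarith

/-- Cramer's rule: the factor on the left is, up to sign, the determinant of the two preceding
identities as a linear system for `weightedInner (p - 2) u u` and `weightedInner p u' u'`. -/
lemma det_mul_weightedInner_self (hu : IsTestFunction 2 u) (c p : ℝ) :
    -p * (c + (1 - p ^ 2) / 4) * weightedInner (p - 2) u u =
      weightedInner (p + 1) (singularOscillator c u) (deriv u) -
        (p + 1) / 2 * weightedInner p (singularOscillator c u) u +
          (p + 2) * weightedInner (p + 2) u u := by
  rw [weightedInner_singularOscillator_self hu, weightedInner_singularOscillator_deriv hu]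
  ring

end Oscillator

section RelativeBound

/-- Kato's notion of relative bound zero, for families of real numbers: up to a multiple of `N`,
the family `F` is bounded by an arbitrarily small multiple of `X`. -/
def RelBoundZero {ι : Type*} (F X N : ι → ℝ) : Prop :=
  ∀ ε > 0, ∃ K ≥ 0, ∀ i, |F i| ≤ ε * X i + K * N i

namespace RelBoundZero

variable {ι : Type*} {F G X Y N : ι → ℝ}

lemma of_abs_le (hX : ∀ i, 0 ≤ X i) (hF : ∀ i, |F i| ≤ N i) : RelBoundZero F X N :=
  fun ε hε => ⟨1, zero_le_one, fun i => by nlinarith [hF i, hX i]⟩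

lemma mono (hG : RelBoundZero G X N) (hFG : ∀ i, |F i| ≤ |G i|) : RelBoundZero F X N :=
  fun ε hε => let ⟨K, hK, hGK⟩ := hG ε hε
    ⟨K, hK, fun i => (hFG i).trans (hGK i)⟩

lemma mono_left (hF : RelBoundZero F X N) (hXY : ∀ i, X i ≤ Y i) : RelBoundZero F Y N :=
  fun ε hε => let ⟨K, hK, hFK⟩ := hF ε hε
    ⟨K, hK, fun i => (hFK i).trans (by gcongr; exact hXY i)⟩

lemma add (hF : RelBoundZero F X N) (hG : RelBoundZero G X N) :
    RelBoundZero (fun i => F i + G i) X N := fun ε hε => by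
  obtain ⟨K, hK, hFK⟩ := hF (ε / 2) (half_pos hε)
  obtain ⟨L, hL, hGL⟩ := hG (ε / 2) (half_pos hε)
  refine ⟨K + L, add_nonneg hK hL, fun i => (abs_add_le _ _).trans ?_⟩
  linarith [hFK i, hGL i]

lemma trans (hX : ∀ i, 0 ≤ X i) (hF : RelBoundZero F X G) (hG : RelBoundZero G X N) :
    RelBoundZero F X N := fun ε hε => by
  obtain ⟨K, hK, hFK⟩ := hF (ε / 2) (half_pos hε)
  obtain ⟨L, hL, hGL⟩ := hG (ε / 2 / (K + 1)) (by positivity)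
  refine ⟨K * L, mul_nonneg hK hL, fun i => ?_⟩
  have hε' : K * (ε / 2 / (K + 1)) ≤ ε / 2 := by
    rw [mul_div_left_comm]
    exact mul_le_of_le_one_right (half_pos hε).le ((div_le_one (by positivity)).2 (by linarith))
  calc |F i| ≤ ε / 2 * X i + K * G i := hFK i
    _ ≤ ε / 2 * X i + K * (ε / 2 / (K + 1) * X i + L * N i) := by
      gcongr
      exact (le_abs_self _).trans (hGL i)
    _ = ε / 2 * X i + K * (ε / 2 / (K + 1)) * X i + K * L * N i := by ring
    _ ≤ ε / 2 * X i + ε / 2 * X i + K * L * N i := by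
      gcongr
      exact hX i
    _ = ε * X i + K * L * N i := by ring

lemma const_mul (hX : ∀ i, 0 ≤ X i) (hF : RelBoundZero F X N) (b : ℝ) :
    RelBoundZero (fun i => b * F i) X N := by
  refine .trans hX (G := fun i => |F i|) (fun ε hε => ⟨|b|, abs_nonneg b, fun i => ?_⟩)
    (hF.mono fun i => (abs_abs (F i)).le)
  rw [abs_mul]
  exact le_add_of_nonneg_left (mul_nonneg hε.le (hX i))

lemma exists_abs_le (hF : RelBoundZero F X N) (hX : RelBoundZero X X N) :
    ∃ K, ∀ i, |F i| ≤ K * N i := by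
  obtain ⟨K, -, hFK⟩ := hF 1 one_pos
  obtain ⟨L, -, hXL⟩ := hX (1 / 2) one_half_pos
  exact ⟨K + 2 * L, fun i => by linarith [hFK i, hXL i, le_abs_self (X i)]⟩

end RelBoundZero

end RelativeBound

section Estimates

lemma exists_rpow_le_mul_rpow_add_mul_rpow {p q r ε : ℝ} (hpq : p < q) (hqr : q ≤ r)
    (hε : 0 < ε) : ∃ K ≥ 0, ∀ x : ℝ, 0 < x → x ^ q ≤ ε * x ^ p + K * x ^ r := by
  set δ := ε ^ (q - p)⁻¹
  have hδ : 0 < δ := Real.rpow_pos_of_pos hε _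
  refine ⟨δ ^ (q - r), by positivity, fun x hx => ?_⟩
  rcases le_total x δ with hxδ | hδx
  · have hsmall : x ^ (q - p) ≤ ε :=
      calc x ^ (q - p) ≤ δ ^ (q - p) := Real.rpow_le_rpow hx.le hxδ (sub_nonneg.2 hpq.le)
        _ = ε := Real.rpow_inv_rpow hε.le (sub_ne_zero.2 hpq.ne')
    calc x ^ q = x ^ (q - p) * x ^ p := by rw [← Real.rpow_add hx, sub_add_cancel]
      _ ≤ ε * x ^ p := by gcongr
      _ ≤ ε * x ^ p + δ ^ (q - r) * x ^ r := le_add_of_nonneg_right (by positivity)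
  · calc x ^ q = x ^ (q - r) * x ^ r := by rw [← Real.rpow_add hx, sub_add_cancel]
      _ ≤ δ ^ (q - r) * x ^ r := mul_le_mul_of_nonneg_right
        (Real.rpow_le_rpow_of_nonpos hδ hδx (sub_nonpos.2 hqr)) (by positivity)
      _ ≤ ε * x ^ p + δ ^ (q - r) * x ^ r := le_add_of_nonneg_left (by positivity)

lemma relBoundZero_weightedInner_self {ι : Type*} {f : ι → ℝ → ℝ}
    (hf : ∀ i, IsTestFunction 0 (f i)) {p q r : ℝ} (hpq : p < q) (hqr : q ≤ r) :
    RelBoundZero (fun i => weightedInner q (f i) (f i)) (fun i => weightedInner p (f i) (f i))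
      (fun i => weightedInner r (f i) (f i)) := fun ε hε => by
  obtain ⟨K, hK, hpow⟩ := exists_rpow_le_mul_rpow_add_mul_rpow hpq hqr hε
  refine ⟨K, hK, fun i => ?_⟩
  have hint (s : ℝ) := integrableOn_rpow_mul_mul (hf i) (hf i) s
  rw [abs_of_nonneg (weightedInner_self_nonneg _ _)]
  unfold weightedInner
  rw [← integral_const_mul, ← integral_const_mul,
    ← integral_add ((hint p).const_mul ε) ((hint r).const_mul K)]
  refine setIntegral_mono_on (hint q) (((hint p).const_mul ε).add ((hint r).const_mul K))
    measurableSet_Ioi fun x hx => ?_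
  linarith [mul_le_mul_of_nonneg_right (hpow x hx) (mul_self_nonneg (f i x))]

/-- The squared graph norm of the operator `singularOscillator c` in `L²(0, ∞)`. -/
noncomputable def graphNormSq (c : ℝ) (u : ℝ → ℝ) : ℝ :=
  weightedInner 0 u u + weightedInner 0 (singularOscillator c u) (singularOscillator c u)

/-- The weighted energy `∫₀^∞ x ^ p (u² / x² + u'²) dx` to be controlled by the graph norm. -/
noncomputable def weightedEnergy (p : ℝ) (u : ℝ → ℝ) : ℝ :=
  weightedInner (p - 2) u u + weightedInner p (deriv u) (deriv u)

lemma weightedEnergy_nonneg (p : ℝ) (u : ℝ → ℝ) : 0 ≤ weightedEnergy p u :=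
  add_nonneg (weightedInner_self_nonneg _ _) (weightedInner_self_nonneg _ _)

variable {ι : Type*} {u : ι → ℝ → ℝ} {c p q : ℝ}

/-- Along the family `u`, the quantity `F` is controlled by the graph norm up to an arbitrarily
small multiple of the weighted energy, so it can be absorbed in an estimate of that energy. -/
abbrev IsEnergySmall (c p : ℝ) (u : ι → ℝ → ℝ) (F : ι → ℝ) : Prop :=
  RelBoundZero F (fun i => weightedEnergy p (u i)) (fun i => graphNormSq c (u i))

lemma isEnergySmall_weightedInner_zero (c p : ℝ) (u : ι → ℝ → ℝ) :
    IsEnergySmall c p u (fun i => weightedInner 0 (u i) (u i)) :=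
  .of_abs_le (fun i => weightedEnergy_nonneg p (u i)) fun i => by
    rw [abs_of_nonneg (weightedInner_self_nonneg _ _)]
    exact le_add_of_nonneg_right (weightedInner_self_nonneg _ _)

lemma isEnergySmall_weightedInner_singularOscillator (c p : ℝ) (u : ι → ℝ → ℝ) :
    IsEnergySmall c p u (fun i =>
      weightedInner 0 (singularOscillator c (u i)) (singularOscillator c (u i))) :=
  .of_abs_le (fun i => weightedEnergy_nonneg p (u i)) fun i => by
    rw [abs_of_nonneg (weightedInner_self_nonneg _ _)]
    exact le_add_of_nonneg_left (weightedInner_self_nonneg _ _)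

lemma isEnergySmall_weightedInner_of_nonpos (hu : ∀ i, IsTestFunction 2 (u i)) (c : ℝ)
    (hpq : p - 2 < q) (hq : q ≤ 0) :
    IsEnergySmall c p u (fun i => weightedInner q (u i) (u i)) :=
  .trans (fun i => weightedEnergy_nonneg p (u i))
    ((relBoundZero_weightedInner_self (fun i => (hu i).of_le zero_le_two) hpq hq).mono_left
      fun _ => le_add_of_nonneg_right (weightedInner_self_nonneg _ _))
    (isEnergySmall_weightedInner_zero c p u)

lemma isEnergySmall_weightedInner_pair {f : ι → ℝ → ℝ} (hu : ∀ i, IsTestFunction 2 (u i))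
    (hf : ∀ i, IsTestFunction 0 (f i))
    (hfq : IsEnergySmall c p u (fun i => weightedInner (2 * q) (f i) (f i))) :
    IsEnergySmall c p u (fun i => weightedInner q (singularOscillator c (u i)) (f i)) :=
  ((isEnergySmall_weightedInner_singularOscillator c p u).add hfq).mono fun i => by
    have h := abs_weightedInner_le ((hu i).singularOscillator c) (hf i) 0 q
    rw [zero_add, mul_zero] at h
    exact h.trans (le_abs_self _)

lemma isEnergySmall_dirichlet_add_moment (hu : ∀ i, IsTestFunction 2 (u i)) (c : ℝ)
    (hp : p < 0) :
    IsEnergySmall c p u (fun i =>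
      weightedInner 0 (deriv (u i)) (deriv (u i)) + weightedInner 2 (u i) (u i)) := by
  have hpair : IsEnergySmall c p u (fun i => weightedInner 0 (singularOscillator c (u i)) (u i)) :=
    isEnergySmall_weightedInner_pair hu (fun i => (hu i).of_le zero_le_two) <| by
      simpa only [mul_zero] using isEnergySmall_weightedInner_zero c p u
  have hsing := (isEnergySmall_weightedInner_of_nonpos hu c (p := p) (q := -2) (by linarith)
    (by norm_num)).const_mul (fun i => weightedEnergy_nonneg p (u i)) (-c)
  refine (hpair.add hsing).mono fun i => le_of_eq (congrArg abs ?_)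
  have h := weightedInner_singularOscillator_self (hu i) c 0
  rw [zero_sub, zero_add] at h
  linarith

lemma isEnergySmall_weightedInner_deriv (hu : ∀ i, IsTestFunction 2 (u i)) (c : ℝ)
    (hpq : p < q) (hq : q ≤ 0) :
    IsEnergySmall c p u (fun i => weightedInner q (deriv (u i)) (deriv (u i))) := by
  refine .trans (fun i => weightedEnergy_nonneg p (u i))
    ((relBoundZero_weightedInner_self (fun i => (hu i).deriv_two.of_le zero_le_one) hpq
      hq).mono_left fun _ => le_add_of_nonneg_left (weightedInner_self_nonneg _ _))
    ((isEnergySmall_dirichlet_add_moment hu c (hpq.trans_le hq)).mono fun i => ?_)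
  exact abs_le_abs_of_nonneg (weightedInner_self_nonneg _ _)
    (le_add_of_nonneg_right (weightedInner_self_nonneg _ _))

lemma isEnergySmall_weightedInner_of_le_two (hu : ∀ i, IsTestFunction 2 (u i)) (c : ℝ)
    (hp : p < 0) (hpq : p - 2 < q) (hq : q ≤ 2) :
    IsEnergySmall c p u (fun i => weightedInner q (u i) (u i)) := by
  refine .trans (fun i => weightedEnergy_nonneg p (u i))
    ((relBoundZero_weightedInner_self (fun i => (hu i).of_le zero_le_two) hpq hq).mono_left
      fun _ => le_add_of_nonneg_right (weightedInner_self_nonneg _ _))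
    ((isEnergySmall_dirichlet_add_moment hu c hp).mono fun i => ?_)
  exact abs_le_abs_of_nonneg (weightedInner_self_nonneg _ _)
    (le_add_of_nonneg_left (weightedInner_self_nonneg _ _))

lemma isEnergySmall_weightedEnergy (hu : ∀ i, IsTestFunction 2 (u i)) (hp₂ : -2 < p)
    (hp₁ : p ≤ -1) (hpc : p ^ 2 ≠ 4 * c + 1) :
    IsEnergySmall c p u (fun i => weightedEnergy p (u i)) := by
  have hX : ∀ i, 0 ≤ weightedEnergy p (u i) := fun i => weightedEnergy_nonneg p (u i)
  have hdet : -p * (c + (1 - p ^ 2) / 4) ≠ 0 :=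
    mul_ne_zero (by linarith) fun h => hpc (by linarith)
  have hpair := isEnergySmall_weightedInner_pair hu (fun i => (hu i).of_le zero_le_two)
    (isEnergySmall_weightedInner_of_nonpos hu c (p := p) (q := 2 * p) (by linarith) (by linarith))
  have hpair_deriv := isEnergySmall_weightedInner_pair hu
    (fun i => (hu i).deriv_two.of_le zero_le_one)
    (isEnergySmall_weightedInner_deriv hu c (p := p) (q := 2 * (p + 1)) (by linarith)
      (by linarith))
  have hmoment := isEnergySmall_weightedInner_of_le_two hu c (p := p) (q := p + 2) (by linarith)
    (by linarith) (by linarith)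
  have hsing : IsEnergySmall c p u (fun i => weightedInner (p - 2) (u i) (u i)) := by
    refine (((hpair_deriv.add (hpair.const_mul hX (-((p + 1) / 2)))).add
      (hmoment.const_mul hX (p + 2))).const_mul hX (-p * (c + (1 - p ^ 2) / 4))⁻¹).mono
      fun i => le_of_eq (congrArg abs ?_)
    rw [eq_inv_mul_iff_mul_eq₀ hdet, det_mul_weightedInner_self (hu i)]
    ring
  have hdirichlet : IsEnergySmall c p u (fun i => weightedInner p (deriv (u i)) (deriv (u i))) := by
    refine ((hpair.add (hsing.const_mul hX (-(c - p * (p - 1) / 2)))).add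
      (hmoment.const_mul hX (-1))).mono fun i => le_of_eq (congrArg abs ?_)
    rw [weightedInner_singularOscillator_self (hu i)]
    ring
  exact hsing.add hdirichlet

lemma exists_mem_Ioo_sq_ne {r s : ℝ} (hrs : r < s) (hs : s ≤ 0) (b : ℝ) :
    ∃ p ∈ Ioo r s, p ^ 2 ≠ b := by
  obtain ⟨p₁, hrp₁, hp₁s⟩ := exists_between hrs
  obtain ⟨p₂, hp₁₂, hp₂s⟩ := exists_between hp₁s
  by_cases h : p₁ ^ 2 = b
  · exact ⟨p₂, ⟨hrp₁.trans hp₁₂, hp₂s⟩, fun h₂ => by nlinarith⟩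
  · exact ⟨p₁, ⟨hrp₁, hp₁s⟩, h⟩

theorem exists_weightedEnergy_le_graphNormSq (hu : ∀ i, IsTestFunction 2 (u i)) (c : ℝ)
    (hq₂ : -2 < q) (hq : q ≤ 0) :
    ∃ K, ∀ i, weightedEnergy q (u i) ≤ K * graphNormSq c (u i) := by
  obtain ⟨p, ⟨hp₂, hp⟩, hpc⟩ := exists_mem_Ioo_sq_ne (r := -2) (s := min (-1) q)
    (lt_min (by norm_num) hq₂) ((min_le_left _ _).trans (by norm_num)) (4 * c + 1)
  obtain ⟨hp₁, hpq⟩ := lt_min_iff.1 hp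
  have hq_small := (isEnergySmall_weightedInner_of_nonpos hu c (p := p) (q := q - 2) (by linarith)
    (by linarith)).add (isEnergySmall_weightedInner_deriv hu c hpq hq)
  obtain ⟨K, hK⟩ := hq_small.exists_abs_le (isEnergySmall_weightedEnergy hu hp₂ hp₁.le hpc)
  exact ⟨K, fun i => (le_abs_self _).trans (hK i)⟩

end Estimates

section Cauchy

lemma cauchyInL2_iff_tendsto_eLpNorm {f : ℕ → ℝ → ℝ} :
    CauchyInL2 f ↔ Tendsto (fun k : ℕ × ℕ =>
      eLpNorm (f k.1 - f k.2) 2 (volume.restrict (Ioi 0))) atTop (𝓝 0) := by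
  rw [← prod_atTop_atTop_eq, (atTop_basis.prod_self).tendsto_iff ENNReal.nhds_zero_basis]
  simp only [CauchyInL2, true_and, Prod.forall, mem_prod, mem_Ici, mem_Iio, and_imp]
  exact forall₂_congr fun ε _ => exists_congr fun N =>
    ⟨fun h m n hm hn => h m hm n hn, fun h m hm n hn => h m n hm hn⟩

lemma toReal_eLpNorm_rpow_mul {f : ℝ → ℝ} (hf : IsTestFunction 0 f) (p : ℝ) :
    (eLpNorm (fun x => x ^ p * f x) 2 (volume.restrict (Ioi 0))).toReal =
      √(weightedInner (2 * p) f f) := by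
  have hmeas := (hf.rpow_mul p).integrable.aestronglyMeasurable.restrict (s := Ioi 0)
  rw [toReal_eLpNorm hmeas, lpNorm_eq_integral_norm_rpow_toReal two_ne_zero ENNReal.ofNat_ne_top
    hmeas, ENNReal.toReal_ofNat, ← one_div, ← Real.sqrt_eq_rpow]
  refine congrArg Real.sqrt (setIntegral_congr_fun measurableSet_Ioi fun x (hx : 0 < x) => ?_)
  simp only [Real.rpow_two, Real.norm_eq_abs, sq_abs, two_mul, Real.rpow_add hx]
  ring

lemma tendsto_sqrt_nhds_zero_iff {α : Type*} {l : Filter α} {h : α → ℝ} (hh : ∀ k, 0 ≤ h k) :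
    Tendsto (fun k => √(h k)) l (𝓝 0) ↔ Tendsto h l (𝓝 0) := by
  constructor
  · intro H
    simpa only [Real.sq_sqrt (hh _), zero_pow two_ne_zero] using H.pow 2
  · intro H
    simpa only [Real.sqrt_zero] using H.sqrt

lemma cauchyInL2_rpow_mul_iff {f : ℕ → ℝ → ℝ} (hf : ∀ n, IsTestFunction 0 (f n)) (p : ℝ) :
    CauchyInL2 (fun n x => x ^ p * f n x) ↔
      Tendsto (fun k : ℕ × ℕ => weightedInner (2 * p) (f k.1 - f k.2) (f k.1 - f k.2))
        atTop (𝓝 0) := by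
  have hsub (k : ℕ × ℕ) : (fun x => x ^ p * f k.1 x) - (fun x => x ^ p * f k.2 x) =
      fun x => x ^ p * (f k.1 - f k.2) x := by
    funext x
    simp only [Pi.sub_apply, mul_sub]
  have htest (k : ℕ × ℕ) : IsTestFunction 0 (f k.1 - f k.2) := (hf k.1).sub (hf k.2)
  have hfinite (k : ℕ × ℕ) :
      eLpNorm (fun x => x ^ p * (f k.1 - f k.2) x) 2 (volume.restrict (Ioi 0)) ≠ ⊤ :=
    (((htest k).rpow_mul p).contDiff.continuous.memLp_of_hasCompactSupport
      ((htest k).rpow_mul p).hasCompactSupport).restrict _ |>.eLpNorm_ne_top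
  simp only [cauchyInL2_iff_tendsto_eLpNorm, hsub]
  rw [← ENNReal.tendsto_toReal_zero_iff hfinite]
  simp only [toReal_eLpNorm_rpow_mul (htest _)]
  exact tendsto_sqrt_nhds_zero_iff fun k => weightedInner_self_nonneg _ _

lemma cauchyInL2_iff {f : ℕ → ℝ → ℝ} (hf : ∀ n, IsTestFunction 0 (f n)) :
    CauchyInL2 f ↔
      Tendsto (fun k : ℕ × ℕ => weightedInner 0 (f k.1 - f k.2) (f k.1 - f k.2)) atTop (𝓝 0) := by
  simpa only [Real.rpow_zero, one_mul, mul_zero] using cauchyInL2_rpow_mul_iff hf 0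

end Cauchy

theorem statement7_general (c a : ℝ) (ha₀ : 0 ≤ a) (ha₂ : a < 2) (φ : ℕ → ℝ → ℝ)
    (hφ : ∀ n, IsTestFunction 2 (φ n)) (hcauchy : CauchyInL2 φ)
    (hcauchyA : CauchyInL2 fun n => singularOscillator c (φ n)) :
    CauchyInL2 (fun n x => x ^ (-1 - a / 2) * φ n x) ∧
      CauchyInL2 (fun n x => x ^ (-(a / 2)) * deriv (φ n) x) := by
  have hφ₀ (n : ℕ) := (hφ n).of_le zero_le_two
  have hφ' (n : ℕ) := (hφ n).deriv_two.of_le zero_le_one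
  have hdiff (k : ℕ × ℕ) : IsTestFunction 2 (φ k.1 - φ k.2) := (hφ k.1).sub (hφ k.2)
  obtain ⟨K, hK⟩ := exists_weightedEnergy_le_graphNormSq hdiff c (q := -a) (by linarith)
    (by linarith)
  have hgraph : Tendsto (fun k : ℕ × ℕ => graphNormSq c (φ k.1 - φ k.2)) atTop (𝓝 0) := by
    simpa only [graphNormSq, singularOscillator_sub (hφ _) (hφ _), add_zero] using
      ((cauchyInL2_iff hφ₀).1 hcauchy).add
        ((cauchyInL2_iff fun n => (hφ n).singularOscillator c).1 hcauchyA)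
  have henergy : Tendsto (fun k : ℕ × ℕ => weightedEnergy (-a) (φ k.1 - φ k.2)) atTop (𝓝 0) :=
    squeeze_zero (fun _ => weightedEnergy_nonneg _ _) hK (by simpa using hgraph.const_mul K)
  rw [cauchyInL2_rpow_mul_iff hφ₀, cauchyInL2_rpow_mul_iff hφ']
  constructor
  · refine squeeze_zero (fun _ => weightedInner_self_nonneg _ _) (fun k => ?_) henergy
    rw [show 2 * (-1 - a / 2) = -a - 2 by ring]
    exact le_add_of_nonneg_right (weightedInner_self_nonneg _ _)
  · refine squeeze_zero (fun _ => weightedInner_self_nonneg _ _) (fun k => ?_) henergy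
    rw [show 2 * -(a / 2) = -a by ring,
      ← ((hφ k.1).of_le one_le_two).deriv_sub ((hφ k.2).of_le one_le_two)]
    exact le_add_of_nonneg_left (weightedInner_self_nonneg _ _)

theorem statement7 (ν a : ℝ) (hν : 1/2 < ν) (ha1 : 1 ≤ a) (ha2 : a < 2) (hνa : ν ≠ a)
    (φ : ℕ → ℝ → ℝ)
    (hsmooth : ∀ n, ContDiff ℝ (⊤ : ℕ∞) (φ n))
    (hsupp : ∀ n, HasCompactSupport (φ n))
    (hsupp' : ∀ n, tsupport (φ n) ⊆ Ioi (0:ℝ))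
    (hC1 : CauchyInL2 φ)
    (hC2 : CauchyInL2 (fun n x =>
      -(deriv (deriv (φ n)) x) + ((ν ^ 2 - 1/4) / x ^ 2 + x ^ 2) * φ n x))
    (hC3 : CauchyInL2 (fun n x => x ^ (-a) * φ n x))
    (hC4 : CauchyInL2 (fun n x => x ^ (1 - a) * deriv (φ n) x)) :
    CauchyInL2 (fun n x => x ^ (-1 - a/2) * φ n x) ∧
    CauchyInL2 (fun n x => x ^ (-(a/2)) * deriv (φ n) x) :=
  statement7_general (ν ^ 2 - 1/4) a (by linarith) ha2 φ
    (fun n => ⟨contDiff_infty.1 (hsmooth n) 2, hsupp n, hsupp' n⟩) hC1 hC2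
end

section
/- Let 1/2 < ν < 1. Let (φ_n) be a sequence of real-valued smooth functions on (0,∞), each with compact support contained in (0,∞), such that (φ_n) and (Aφ_n) are Cauchy in L²(0,∞), where (Aφ)(x) = −φ''(x) + ((ν²−1/4)/x² + x²)·φ(x). Then the sequences of functions x ↦ x^{−ν−1/2}·φ_n(x) and x ↦ x^{−ν+1/2}·φ_n'(x) converge uniformly on (0,1], their uniform limits F and G are continuous on (0,1] and satisfy lim_{x→0⁺} F(x) = 0 and lim_{x→0⁺} G(x) = 0; in particular, the L²(0,∞)-limit φ of (φ_n) has a representative satisfying φ(x) = o(x^{ν+1/2}) as x → 0⁺. -/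
open MeasureTheory Set Filter Topology Asymptotics

/-!
Let `h(x) = x ^ (ν + 1/2)`, which solves `-h'' + ((ν² - 1/4) / x²) h = 0`. If `ψ` vanishes near the
origin and `-ψ'' + ((ν² - 1/4) / x²) ψ = f`, then the Wronskian `W = h ψ' - h' ψ` satisfies
`W' = -h f`, so Cauchy-Schwarz on `(0, x)` gives `|W(x)| ≤ ‖f‖ x ^ (ν + 1) / √(2ν + 2)`. Since
`(ψ / h)' = W / h²` is then `O(x ^ (-ν))`, which is integrable at the origin for `ν < 1`, both
`ψ / h` and `x ^ (-ν + 1/2) ψ'` are bounded by a multiple of `‖f‖` on `(0, 1]`. Applied to the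
differences `φ_m - φ_n`, for which the potential bounded near the origin can be absorbed into `f`,
these bounds turn Cauchy sequences in `L²` into uniformly Cauchy ones.
-/

section Integration

lemma abs_integral_mul_le_lpNorm_two_mul {α : Type*} [MeasurableSpace α] {μ : Measure α}
    {f g : α → ℝ} (hf : MemLp f 2 μ) (hg : MemLp g 2 μ) :
    |∫ x, f x * g x ∂μ| ≤ lpNorm f 2 μ * lpNorm g 2 μ := by
  have inner_eq : inner ℝ (hg.toLp g) (hf.toLp f) = ∫ x, f x * g x ∂μ := by
    rw [L2.inner_def]
    refine integral_congr_ae ?_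
    filter_upwards [hf.coeFn_toLp, hg.coeFn_toLp] with x hfx hgx
    simp [hfx, hgx]
  have h := abs_real_inner_le_norm (hg.toLp g) (hf.toLp f)
  rwa [inner_eq, Lp.norm_toLp, Lp.norm_toLp, toReal_eLpNorm hf.1, toReal_eLpNorm hg.1,
    mul_comm] at h

variable {p x : ℝ}

lemma memLp_two_rpow_Ioc (hp : -1 < 2 * p) (hx : 0 ≤ x) :
    MemLp (fun t : ℝ => t ^ p) 2 (volume.restrict (Ioc 0 x)) := by
  have hmeas : AEStronglyMeasurable (fun t : ℝ => t ^ p) (volume.restrict (Ioc 0 x)) := by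
    fun_prop
  rw [memLp_two_iff_integrable_sq hmeas]
  have hint : IntegrableOn (fun t : ℝ => t ^ (2 * p)) (Ioc 0 x) :=
    (intervalIntegrable_iff_integrableOn_Ioc_of_le hx).1
      (intervalIntegral.intervalIntegrable_rpow' hp)
  refine hint.congr_fun (fun t ht => ?_) measurableSet_Ioc
  simp only [mul_comm 2 p, Real.rpow_mul ht.1.le, Real.rpow_two]

lemma lpNorm_two_rpow_Ioc (hp : -1 < 2 * p) (hx : 0 ≤ x) :
    lpNorm (fun t : ℝ => t ^ p) 2 (volume.restrict (Ioc 0 x)) =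
      √(x ^ (2 * p + 1) / (2 * p + 1)) := by
  have hsq : ∫ t in Ioc 0 x, ‖t ^ p‖ ^ (2 : ℝ) = x ^ (2 * p + 1) / (2 * p + 1) := calc
    ∫ t in Ioc 0 x, ‖t ^ p‖ ^ (2 : ℝ) = ∫ t in Ioc 0 x, t ^ (2 * p) := by
      refine setIntegral_congr_fun measurableSet_Ioc fun t ht => ?_
      rw [mul_comm, Real.rpow_mul ht.1.le, Real.norm_of_nonneg (Real.rpow_nonneg ht.1.le p)]
    _ = x ^ (2 * p + 1) / (2 * p + 1) := by
      rw [← intervalIntegral.integral_of_le hx, integral_rpow (Or.inl hp),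
        Real.zero_rpow (by linarith), sub_zero]
  rw [lpNorm_eq_integral_norm_rpow_toReal two_ne_zero ENNReal.ofNat_ne_top
    (memLp_two_rpow_Ioc hp hx).1, ENNReal.toReal_ofNat, hsq, Real.sqrt_eq_rpow, one_div]

lemma abs_integral_rpow_mul_le (hp : -1 < 2 * p) (hx : 0 ≤ x) {f : ℝ → ℝ}
    (hf : MemLp f 2 (volume.restrict (Ioc 0 x))) :
    |∫ t in 0..x, t ^ p * f t| ≤
      √(x ^ (2 * p + 1) / (2 * p + 1)) * lpNorm f 2 (volume.restrict (Ioc 0 x)) := by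
  rw [intervalIntegral.integral_of_le hx, ← lpNorm_two_rpow_Ioc hp hx]
  exact abs_integral_mul_le_lpNorm_two_mul (memLp_two_rpow_Ioc hp hx) hf

lemma norm_le_of_norm_deriv_le_rpow {E : Type*} [NormedAddCommGroup E] [NormedSpace ℝ E]
    [CompleteSpace E] {f f' : ℝ → E} {C : ℝ} (hp : -1 < p) (hx : 0 < x)
    (hderiv : ∀ t ∈ Ioc 0 x, HasDerivAt f (f' t) t) (hzero : Tendsto f (𝓝[>] 0) (𝓝 0))
    (hbound : ∀ t ∈ Ioc 0 x, ‖f' t‖ ≤ C * t ^ p) :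
    ‖f x‖ ≤ C / (p + 1) * x ^ (p + 1) := by
  have hbound' : ∀ t ∈ Ioc 0 x, ‖deriv f t‖ ≤ C * t ^ p := fun t ht => by
    rw [(hderiv t ht).deriv]
    exact hbound t ht
  have hdom : IntervalIntegrable (fun t : ℝ => C * t ^ p) volume 0 x :=
    (intervalIntegral.intervalIntegrable_rpow' hp).const_mul C
  have hint : IntervalIntegrable (deriv f) volume 0 x := by
    refine hdom.mono_fun' (aestronglyMeasurable_deriv f _) ?_
    rw [uIoc_of_le hx.le]
    exact (ae_restrict_mem measurableSet_Ioc).mono hbound'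
  have hFTC : ∫ t in 0..x, deriv f t = f x - 0 :=
    intervalIntegral.integral_eq_sub_of_hasDerivAt_of_tendsto hx
      (fun t ht => (hderiv t ⟨ht.1, ht.2.le⟩).differentiableAt.hasDerivAt) hint hzero
      ((hderiv x ⟨hx, le_rfl⟩).continuousAt.tendsto.mono_left nhdsWithin_le_nhds)
  calc
    ‖f x‖ = ‖∫ t in 0..x, deriv f t‖ := by rw [hFTC, sub_zero]
    _ ≤ ∫ t in 0..x, C * t ^ p :=
      intervalIntegral.norm_integral_le_of_norm_le hx.le (ae_of_all _ hbound') hdom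
    _ = C / (p + 1) * x ^ (p + 1) := by
      rw [intervalIntegral.integral_const_mul, integral_rpow (Or.inl hp),
        Real.zero_rpow (by linarith), sub_zero]
      ring

end Integration

section UniformLimits

variable {ι α E : Type*} {p : Filter ι} {s : Set α} {u : ι → α → E}

lemma uniformCauchySeqOn_of_dist_le_mul_toReal [PseudoMetricSpace E] {δ : ι × ι → ENNReal} {c : ℝ}
    (hδ : Tendsto δ (p ×ˢ p) (𝓝 0))
    (h : ∀ q, δ q ≠ ⊤ → ∀ x ∈ s, dist (u q.1 x) (u q.2 x) ≤ c * (δ q).toReal) :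
    UniformCauchySeqOn u p s := by
  have hlim : Tendsto (fun q => c * (δ q).toReal) (p ×ˢ p) (𝓝 0) := by
    simpa using ((ENNReal.tendsto_toReal ENNReal.zero_ne_top).comp hδ).const_mul c
  intro U hU
  obtain ⟨ε, hε, hεU⟩ := Metric.mem_uniformity_dist.1 hU
  filter_upwards [hδ.eventually_ne ENNReal.zero_ne_top, hlim.eventually_lt_const hε]
    with q hfin hlt x hx
  exact hεU ((h q hfin x hx).trans_lt hlt)

lemma exists_tendstoUniformlyOn_of_uniformCauchySeqOn [UniformSpace E] [CompleteSpace E]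
    [TopologicalSpace α] [p.NeBot] {l : Filter α} {e : E}
    (hu : UniformCauchySeqOn u p s) (hcont : ∀ i, ContinuousOn (u i) s)
    (hsl : s ∈ l) (hlim : ∀ i, Tendsto (u i) l (𝓝 e)) :
    ∃ F : α → E, TendstoUniformlyOn u F p s ∧ ContinuousOn F s ∧ Tendsto F l (𝓝 e) := by
  have hpointwise : ∀ x, ∃ y, x ∈ s → Tendsto (fun i => u i x) p (𝓝 y) := fun x => by
    by_cases hx : x ∈ s
    · exact (CompleteSpace.complete (hu.cauchy_map hx)).imp fun y hy _ => hy
    · obtain ⟨i⟩ := p.nonempty_of_neBot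
      exact ⟨u i x, fun h => absurd h hx⟩
  choose F hF using hpointwise
  have hunif : TendstoUniformlyOn u F p s := hu.tendstoUniformlyOn_of_tendsto hF
  refine ⟨F, hunif, hunif.continuousOn (Frequently.of_forall hcont), ?_⟩
  have hunif_l : TendstoUniformlyOnFilter u F p l :=
    hunif.tendstoUniformlyOnFilter.mono_right (le_principal_iff.2 hsl)
  exact hunif_l.tendsto_of_eventually_tendsto (Eventually.of_forall hlim) tendsto_const_nhds

end UniformLimits

section CauchyInL2

variable {f : ℕ → ℝ → ℝ}

lemma CauchyInL2.tendsto_eLpNorm_sub (hf : CauchyInL2 f) :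
    Tendsto (fun q : ℕ × ℕ => eLpNorm (fun x => f q.1 x - f q.2 x) 2 (volume.restrict (Ioi 0)))
      (atTop ×ˢ atTop) (𝓝 0) := by
  rw [ENNReal.tendsto_nhds_zero]
  intro ε hε
  obtain ⟨N, hN⟩ := hf ε hε
  filter_upwards [(eventually_ge_atTop N).prod_mk (eventually_ge_atTop N)] with q hq
  exact (hN q.1 hq.1 q.2 hq.2).le

lemma CauchyInL2.exists_tendsto_eLpNorm_sub_eqOn (hf : CauchyInL2 f)
    (hmem : ∀ n, MemLp (f n) 2 (volume.restrict (Ioi 0))) {s : Set ℝ} {h : ℝ → ℝ}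
    (hlim : ∀ x ∈ s, Tendsto (fun n => f n x) atTop (𝓝 (h x))) :
    ∃ g : ℝ → ℝ,
      Tendsto (fun n => eLpNorm (fun x => f n x - g x) 2 (volume.restrict (Ioi 0))) atTop (𝓝 0) ∧
        EqOn g h s := by
  have hcauchy : CauchySeq fun n => (hmem n).toLp (f n) := by
    rw [EMetric.cauchySeq_iff]
    intro ε hε
    obtain ⟨N, hN⟩ := hf ε hε
    refine ⟨N, fun m hm n hn => ?_⟩
    rw [Lp.edist_toLp_toLp]
    exact hN m hm n hn
  obtain ⟨k, hk⟩ := cauchySeq_tendsto_of_complete hcauchy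
  replace hk : Tendsto (fun n => eLpNorm (f n - (k : ℝ → ℝ)) 2 (volume.restrict (Ioi 0)))
      atTop (𝓝 0) := by
    rw [Lp.tendsto_Lp_iff_tendsto_eLpNorm'] at hk
    exact hk.congr fun n => eLpNorm_congr_ae ((hmem n).coeFn_toLp.sub (ae_eq_refl (k : ℝ → ℝ)))
  obtain ⟨ns, hns, hae⟩ := (tendstoInMeasure_of_tendsto_eLpNorm two_ne_zero
    (fun n => (hmem n).1) (Lp.aestronglyMeasurable k) hk).exists_seq_tendsto_ae
  classical
  refine ⟨s.piecewise h k, hk.congr fun n => eLpNorm_congr_ae ?_, s.piecewise_eqOn h k⟩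
  filter_upwards [hae] with x hx
  by_cases hxs : x ∈ s
  · rw [Pi.sub_apply, s.piecewise_eq_of_mem _ _ hxs,
      tendsto_nhds_unique hx ((hlim x hxs).comp hns.tendsto_atTop)]
  · rw [Pi.sub_apply, s.piecewise_eq_of_notMem _ _ hxs]

lemma CauchyInL2.tendsto_eLpNorm_sub_mul_sub {g : ℕ → ℝ → ℝ} {V : ℝ → ℝ} {C : ℝ} {s : Set ℝ}
    (hf : CauchyInL2 f) (hg : CauchyInL2 g) (hs : MeasurableSet s) (hs0 : s ⊆ Ioi 0)
    (hfm : ∀ n, AEStronglyMeasurable (f n) (volume.restrict s))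
    (hgm : ∀ n, AEStronglyMeasurable (g n) (volume.restrict s))
    (hVm : AEStronglyMeasurable V (volume.restrict s)) (hVC : ∀ x ∈ s, |V x| ≤ C) :
    Tendsto (fun q : ℕ × ℕ =>
        eLpNorm ((g q.1 - V * f q.1) - (g q.2 - V * f q.2)) 2 (volume.restrict s))
      (atTop ×ˢ atTop) (𝓝 0) := by
  have hsum := hg.tendsto_eLpNorm_sub.add
    (ENNReal.Tendsto.const_mul hf.tendsto_eLpNorm_sub (Or.inr (ENNReal.ofReal_ne_top (r := C))))
  rw [mul_zero, add_zero] at hsum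
  have hmono : volume.restrict s ≤ volume.restrict (Ioi 0) := Measure.restrict_mono hs0 le_rfl
  refine tendsto_of_tendsto_of_tendsto_of_le_of_le tendsto_const_nhds hsum
    (fun _ => zero_le) fun q => ?_
  have hVbound : ∀ᵐ x ∂volume.restrict s,
      ‖(V * (f q.1 - f q.2)) x‖ ≤ C * ‖(f q.1 - f q.2) x‖ := by
    filter_upwards [ae_restrict_mem hs] with x hx
    rw [Pi.mul_apply, norm_mul]
    gcongr
    exact hVC x hx
  calc
    eLpNorm ((g q.1 - V * f q.1) - (g q.2 - V * f q.2)) 2 (volume.restrict s)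
      = eLpNorm ((g q.1 - g q.2) - V * (f q.1 - f q.2)) 2 (volume.restrict s) := by ring_nf
    _ ≤ eLpNorm (g q.1 - g q.2) 2 (volume.restrict s) +
          eLpNorm (V * (f q.1 - f q.2)) 2 (volume.restrict s) :=
        eLpNorm_sub_le ((hgm _).sub (hgm _)) (hVm.mul ((hfm _).sub (hfm _))) one_le_two
    _ ≤ eLpNorm (g q.1 - g q.2) 2 (volume.restrict s) +
          ENNReal.ofReal C * eLpNorm (f q.1 - f q.2) 2 (volume.restrict s) := by
        gcongr
        exact eLpNorm_le_mul_eLpNorm_of_ae_le_mul hVbound 2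
    _ ≤ _ := add_le_add (eLpNorm_mono_measure _ hmono)
        (mul_le_mul_right (eLpNorm_mono_measure _ hmono) _)

end CauchyInL2

/-- `ψ` solves the inhomogeneous Bessel equation `-ψ'' + ((ν² - 1 / 4) / x²) ψ = f` on `(0, ∞)` with
continuous right-hand side, and vanishes near the origin. The derivative `ψ'` is a parameter, which
makes the notion linear in `(ψ, ψ', f)`. -/
structure IsBesselSolution (ν : ℝ) (ψ ψ' f : ℝ → ℝ) : Prop where
  hasDerivAt : ∀ x > 0, HasDerivAt ψ (ψ' x) x
  hasDerivAt_deriv : ∀ x > 0, HasDerivAt ψ' ((ν ^ 2 - 1 / 4) / x ^ 2 * ψ x - f x) x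
  continuousOn : ContinuousOn f (Ioi 0)
  eventually_eq_zero : ∀ᶠ x in 𝓝[>] 0, ψ x = 0 ∧ ψ' x = 0

/-- The Wronskian `h ψ' - h' ψ` of `ψ` with the solution `h(x) = x ^ (ν + 1 / 2)` of the homogeneous
Bessel equation. -/
noncomputable def besselWronskian (ν : ℝ) (ψ ψ' : ℝ → ℝ) (x : ℝ) : ℝ :=
  x ^ (ν + 1 / 2) * ψ' x - (ν + 1 / 2) * x ^ (ν - 1 / 2) * ψ x

namespace IsBesselSolution

variable {ν b x : ℝ} {ψ ψ' f ψ₁ ψ₁' f₁ ψ₂ ψ₂' f₂ : ℝ → ℝ}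

lemma sub (h₁ : IsBesselSolution ν ψ₁ ψ₁' f₁) (h₂ : IsBesselSolution ν ψ₂ ψ₂' f₂) :
    IsBesselSolution ν (ψ₁ - ψ₂) (ψ₁' - ψ₂') (f₁ - f₂) where
  hasDerivAt x hx := (h₁.hasDerivAt x hx).sub (h₂.hasDerivAt x hx)
  hasDerivAt_deriv x hx :=
    ((h₁.hasDerivAt_deriv x hx).sub (h₂.hasDerivAt_deriv x hx)).congr_deriv (by
      simp only [Pi.sub_apply]
      ring)
  continuousOn := h₁.continuousOn.sub h₂.continuousOn
  eventually_eq_zero := by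
    filter_upwards [h₁.eventually_eq_zero, h₂.eventually_eq_zero] with x hx₁ hx₂
    simp [hx₁, hx₂]

lemma hasDerivAt_besselWronskian (h : IsBesselSolution ν ψ ψ' f) (hx : 0 < x) :
    HasDerivAt (besselWronskian ν ψ ψ') (-(x ^ (ν + 1 / 2) * f x)) x := by
  have hplus : HasDerivAt (fun t : ℝ => t ^ (ν + 1 / 2)) ((ν + 1 / 2) * x ^ (ν - 1 / 2)) x :=
    (Real.hasDerivAt_rpow_const (Or.inl hx.ne')).congr_deriv (by ring_nf)
  have hminus : HasDerivAt (fun t : ℝ => t ^ (ν - 1 / 2)) ((ν - 1 / 2) * x ^ (ν - 1 / 2 - 1)) x :=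
    Real.hasDerivAt_rpow_const (Or.inl hx.ne')
  refine ((hplus.mul (h.hasDerivAt_deriv x hx)).sub
    ((hminus.const_mul (ν + 1 / 2)).mul (h.hasDerivAt x hx))).congr_deriv ?_
  have hpow : x ^ (ν + 1 / 2) = x ^ (ν - 1 / 2 - 1) * x ^ 2 := by
    rw [← Real.rpow_two, ← Real.rpow_add hx]
    ring_nf
  rw [hpow]
  field_simp
  ring

lemma tendsto_besselWronskian (h : IsBesselSolution ν ψ ψ' f) :
    Tendsto (besselWronskian ν ψ ψ') (𝓝[>] 0) (𝓝 0) := by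
  refine tendsto_const_nhds.congr' ?_
  filter_upwards [h.eventually_eq_zero] with x hx
  simp [besselWronskian, hx]

lemma tendsto_rpow_mul (h : IsBesselSolution ν ψ ψ' f) (p : ℝ) :
    Tendsto (fun x => x ^ p * ψ x) (𝓝[>] 0) (𝓝 0) := by
  refine tendsto_const_nhds.congr' ?_
  filter_upwards [h.eventually_eq_zero] with x hx
  simp [hx]

lemma tendsto_rpow_mul_deriv (h : IsBesselSolution ν ψ ψ' f) (p : ℝ) :
    Tendsto (fun x => x ^ p * ψ' x) (𝓝[>] 0) (𝓝 0) := by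
  refine tendsto_const_nhds.congr' ?_
  filter_upwards [h.eventually_eq_zero] with x hx
  simp [hx]

lemma continuousOn_rpow_mul (h : IsBesselSolution ν ψ ψ' f) (p : ℝ) :
    ContinuousOn (fun x => x ^ p * ψ x) (Ioi 0) := fun x hx =>
  ((Real.continuousAt_rpow_const x p (Or.inl hx.ne')).mul
    (h.hasDerivAt x hx).continuousAt).continuousWithinAt

lemma continuousOn_rpow_mul_deriv (h : IsBesselSolution ν ψ ψ' f) (p : ℝ) :
    ContinuousOn (fun x => x ^ p * ψ' x) (Ioi 0) := fun x hx =>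
  ((Real.continuousAt_rpow_const x p (Or.inl hx.ne')).mul
    (h.hasDerivAt_deriv x hx).continuousAt).continuousWithinAt

lemma besselWronskian_eq_neg_integral (h : IsBesselSolution ν ψ ψ' f) (hν : -1 < ν) (hx : 0 < x)
    (hf : MemLp f 2 (volume.restrict (Ioc 0 x))) :
    besselWronskian ν ψ ψ' x = -∫ t in 0..x, t ^ (ν + 1 / 2) * f t := by
  have hint : IntervalIntegrable (fun t => t ^ (ν + 1 / 2) * f t) volume 0 x :=
    (intervalIntegrable_iff_integrableOn_Ioc_of_le hx.le).2
      ((memLp_two_rpow_Ioc (by linarith) hx.le).integrable_mul hf)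
  have hFTC := intervalIntegral.integral_eq_sub_of_hasDerivAt_of_tendsto hx
    (fun t ht => h.hasDerivAt_besselWronskian ht.1) hint.neg h.tendsto_besselWronskian
    ((h.hasDerivAt_besselWronskian hx).continuousAt.tendsto.mono_left nhdsWithin_le_nhds)
  rw [← intervalIntegral.integral_neg, hFTC, sub_zero]

lemma abs_besselWronskian_le (h : IsBesselSolution ν ψ ψ' f) (hν : -1 < ν) (hx : x ∈ Ioc 0 b)
    (hf : MemLp f 2 (volume.restrict (Ioc 0 b))) :
    |besselWronskian ν ψ ψ' x| ≤
      lpNorm f 2 (volume.restrict (Ioc 0 b)) / √(2 * ν + 2) * x ^ (ν + 1) := by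
  have hmono : volume.restrict (Ioc 0 x) ≤ volume.restrict (Ioc 0 b) :=
    Measure.restrict_mono (Ioc_subset_Ioc_right hx.2) le_rfl
  have hfx : MemLp f 2 (volume.restrict (Ioc 0 x)) := hf.mono_measure hmono
  have hnorm : lpNorm f 2 (volume.restrict (Ioc 0 x)) ≤
      lpNorm f 2 (volume.restrict (Ioc 0 b)) := by
    rw [← toReal_eLpNorm hfx.1, ← toReal_eLpNorm hf.1]
    exact ENNReal.toReal_mono hf.2.ne (eLpNorm_mono_measure f hmono)
  have hsqrt : √(x ^ (2 * (ν + 1 / 2) + 1) / (2 * (ν + 1 / 2) + 1)) =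
      x ^ (ν + 1) / √(2 * ν + 2) := by
    have hpow : x ^ (2 * (ν + 1 / 2) + 1) = (x ^ (ν + 1)) ^ 2 := by
      rw [← Real.rpow_mul_natCast hx.1.le]
      push_cast
      ring_nf
    rw [hpow, Real.sqrt_div (sq_nonneg _), Real.sqrt_sq (Real.rpow_nonneg hx.1.le _)]
    ring_nf
  rw [h.besselWronskian_eq_neg_integral hν hx.1 hfx, abs_neg]
  calc
    |∫ t in 0..x, t ^ (ν + 1 / 2) * f t|
      ≤ x ^ (ν + 1) / √(2 * ν + 2) * lpNorm f 2 (volume.restrict (Ioc 0 x)) :=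
        hsqrt ▸ abs_integral_rpow_mul_le (by linarith) hx.1.le hfx
    _ ≤ x ^ (ν + 1) / √(2 * ν + 2) * lpNorm f 2 (volume.restrict (Ioc 0 b)) := by
      have := hx.1
      gcongr
    _ = lpNorm f 2 (volume.restrict (Ioc 0 b)) / √(2 * ν + 2) * x ^ (ν + 1) := by ring

lemma hasDerivAt_rpow_mul (h : IsBesselSolution ν ψ ψ' f) (hx : 0 < x) :
    HasDerivAt (fun t => t ^ (-ν - 1 / 2) * ψ t)
      (x ^ (-2 * ν - 1) * besselWronskian ν ψ ψ' x) x := by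
  have hpow : HasDerivAt (fun t : ℝ => t ^ (-ν - 1 / 2)) ((-ν - 1 / 2) * x ^ (-ν - 1 / 2 - 1)) x :=
    Real.hasDerivAt_rpow_const (Or.inl hx.ne')
  refine (hpow.mul (h.hasDerivAt x hx)).congr_deriv ?_
  have hψ' : x ^ (-ν - 1 / 2) = x ^ (-2 * ν - 1) * x ^ (ν + 1 / 2) := by
    rw [← Real.rpow_add hx]
    ring_nf
  have hψ : x ^ (-ν - 1 / 2 - 1) = x ^ (-2 * ν - 1) * x ^ (ν - 1 / 2) := by
    rw [← Real.rpow_add hx]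
    ring_nf
  rw [hψ', hψ, besselWronskian]
  ring

lemma abs_rpow_mul_le (h : IsBesselSolution ν ψ ψ' f) (hν : -1 < ν) (hν1 : ν < 1)
    (hx : x ∈ Ioc 0 b) (hf : MemLp f 2 (volume.restrict (Ioc 0 b))) :
    |x ^ (-ν - 1 / 2) * ψ x| ≤
      lpNorm f 2 (volume.restrict (Ioc 0 b)) / √(2 * ν + 2) / (1 - ν) * x ^ (1 - ν) := by
  set C := lpNorm f 2 (volume.restrict (Ioc 0 b)) / √(2 * ν + 2)
  have hbound : ∀ t ∈ Ioc 0 x,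
      ‖t ^ (-2 * ν - 1) * besselWronskian ν ψ ψ' t‖ ≤ C * t ^ (-ν) := fun t ht => by
    have ht0 : 0 ≤ t ^ (-2 * ν - 1) := Real.rpow_nonneg ht.1.le _
    rw [norm_mul, Real.norm_of_nonneg ht0, Real.norm_eq_abs]
    calc
      t ^ (-2 * ν - 1) * |besselWronskian ν ψ ψ' t| ≤ t ^ (-2 * ν - 1) * (C * t ^ (ν + 1)) := by
        gcongr
        exact h.abs_besselWronskian_le hν ⟨ht.1, ht.2.trans hx.2⟩ hf
      _ = C * t ^ (-ν) := by
        rw [mul_left_comm, ← Real.rpow_add ht.1]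
        ring_nf
  have hint := norm_le_of_norm_deriv_le_rpow (by linarith) hx.1
    (fun t ht => h.hasDerivAt_rpow_mul ht.1) (h.tendsto_rpow_mul _) hbound
  rwa [neg_add_eq_sub] at hint

lemma rpow_mul_deriv_eq (ψ ψ' : ℝ → ℝ) (hx : 0 < x) :
    x ^ (-ν + 1 / 2) * ψ' x =
      (ν + 1 / 2) * (x ^ (-ν - 1 / 2) * ψ x) + x ^ (-2 * ν) * besselWronskian ν ψ ψ' x := by
  have hψ' : x ^ (-ν + 1 / 2) = x ^ (-2 * ν) * x ^ (ν + 1 / 2) := by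
    rw [← Real.rpow_add hx]
    ring_nf
  have hψ : x ^ (-ν - 1 / 2) = x ^ (-2 * ν) * x ^ (ν - 1 / 2) := by
    rw [← Real.rpow_add hx]
    ring_nf
  rw [hψ', hψ, besselWronskian]
  ring

lemma abs_rpow_mul_deriv_le (h : IsBesselSolution ν ψ ψ' f) (hν : -1 < ν) (hν1 : ν < 1)
    (hx : x ∈ Ioc 0 b) (hf : MemLp f 2 (volume.restrict (Ioc 0 b))) :
    |x ^ (-ν + 1 / 2) * ψ' x| ≤
      lpNorm f 2 (volume.restrict (Ioc 0 b)) / √(2 * ν + 2) * (|ν + 1 / 2| / (1 - ν) + 1) *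
        x ^ (1 - ν) := by
  set C := lpNorm f 2 (volume.restrict (Ioc 0 b)) / √(2 * ν + 2)
  rw [rpow_mul_deriv_eq ψ ψ' hx.1]
  calc
    |(ν + 1 / 2) * (x ^ (-ν - 1 / 2) * ψ x) + x ^ (-2 * ν) * besselWronskian ν ψ ψ' x|
      ≤ |ν + 1 / 2| * |x ^ (-ν - 1 / 2) * ψ x| + x ^ (-2 * ν) * |besselWronskian ν ψ ψ' x| := by
        refine (abs_add_le _ _).trans_eq ?_
        rw [abs_mul, abs_mul (x ^ (-2 * ν)), abs_of_nonneg (Real.rpow_nonneg hx.1.le (-2 * ν))]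
    _ ≤ |ν + 1 / 2| * (C / (1 - ν) * x ^ (1 - ν)) + x ^ (-2 * ν) * (C * x ^ (ν + 1)) := by
      have := Real.rpow_nonneg hx.1.le (-2 * ν)
      gcongr
      · exact h.abs_rpow_mul_le hν hν1 hx hf
      · exact h.abs_besselWronskian_le hν hx hf
    _ = C * (|ν + 1 / 2| / (1 - ν) + 1) * x ^ (1 - ν) := by
      rw [mul_left_comm (x ^ (-2 * ν)), ← Real.rpow_add hx.1]
      ring_nf

lemma memLp_two_of_eLpNorm_ne_top (h : IsBesselSolution ν ψ ψ' f)
    (hf : eLpNorm f 2 (volume.restrict (Ioc 0 b)) ≠ ⊤) : MemLp f 2 (volume.restrict (Ioc 0 b)) :=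
  ⟨(h.continuousOn.mono Ioc_subset_Ioi_self).aestronglyMeasurable measurableSet_Ioc, hf.lt_top⟩

section Sequence

variable {ι : Type*} {p : Filter ι} {φ φ' g : ι → ℝ → ℝ}

lemma uniformCauchySeqOn_rpow_mul (h : ∀ i, IsBesselSolution ν (φ i) (φ' i) (g i))
    (hν : -1 < ν) (hν1 : ν < 1)
    (hg : Tendsto (fun q : ι × ι => eLpNorm (g q.1 - g q.2) 2 (volume.restrict (Ioc 0 b)))
      (p ×ˢ p) (𝓝 0)) :
    UniformCauchySeqOn (fun i x => x ^ (-ν - 1 / 2) * φ i x) p (Ioc 0 b) := by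
  refine uniformCauchySeqOn_of_dist_le_mul_toReal
    (c := b ^ (1 - ν) / √(2 * ν + 2) / (1 - ν)) hg fun q hq x hx => ?_
  have hsub := (h q.1).sub (h q.2)
  have hmem := hsub.memLp_two_of_eLpNorm_ne_top hq
  have : 0 < 1 - ν := sub_pos.2 hν1
  rw [Real.dist_eq, ← mul_sub, toReal_eLpNorm hmem.1]
  set N := lpNorm (g q.1 - g q.2) 2 (volume.restrict (Ioc 0 b))
  calc
    |x ^ (-ν - 1 / 2) * (φ q.1 x - φ q.2 x)| ≤ N / √(2 * ν + 2) / (1 - ν) * x ^ (1 - ν) :=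
      hsub.abs_rpow_mul_le hν hν1 hx hmem
    _ ≤ N / √(2 * ν + 2) / (1 - ν) * b ^ (1 - ν) := by
      have hN : 0 ≤ N := lpNorm_nonneg
      have hx0 := hx.1.le
      gcongr
      exact hx.2
    _ = b ^ (1 - ν) / √(2 * ν + 2) / (1 - ν) * N := by ring

lemma uniformCauchySeqOn_rpow_mul_deriv (h : ∀ i, IsBesselSolution ν (φ i) (φ' i) (g i))
    (hν : -1 < ν) (hν1 : ν < 1)
    (hg : Tendsto (fun q : ι × ι => eLpNorm (g q.1 - g q.2) 2 (volume.restrict (Ioc 0 b)))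
      (p ×ˢ p) (𝓝 0)) :
    UniformCauchySeqOn (fun i x => x ^ (-ν + 1 / 2) * φ' i x) p (Ioc 0 b) := by
  set D := |ν + 1 / 2| / (1 - ν) + 1
  have : 0 ≤ D := add_nonneg (div_nonneg (abs_nonneg _) (sub_pos.2 hν1).le) zero_le_one
  refine uniformCauchySeqOn_of_dist_le_mul_toReal
    (c := b ^ (1 - ν) / √(2 * ν + 2) * D) hg fun q hq x hx => ?_
  have hsub := (h q.1).sub (h q.2)
  have hmem := hsub.memLp_two_of_eLpNorm_ne_top hq
  rw [Real.dist_eq, ← mul_sub, toReal_eLpNorm hmem.1]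
  set N := lpNorm (g q.1 - g q.2) 2 (volume.restrict (Ioc 0 b))
  calc
    |x ^ (-ν + 1 / 2) * (φ' q.1 x - φ' q.2 x)| ≤ N / √(2 * ν + 2) * D * x ^ (1 - ν) :=
      hsub.abs_rpow_mul_deriv_le hν hν1 hx hmem
    _ ≤ N / √(2 * ν + 2) * D * b ^ (1 - ν) := by
      have hN : 0 ≤ N := lpNorm_nonneg
      have hx0 := hx.1.le
      gcongr
      exact hx.2
    _ = b ^ (1 - ν) / √(2 * ν + 2) * D * N := by ring

end Sequence

end IsBesselSolution

/-- The Bessel operator `-d²/dx² + (ν² - 1 / 4) / x²`: the singular part of the Schrödinger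
operator, without its potential that is bounded near the origin. -/
noncomputable def besselOperator (ν : ℝ) (ψ : ℝ → ℝ) (x : ℝ) : ℝ :=
  -(deriv (deriv ψ) x) + (ν ^ 2 - 1 / 4) / x ^ 2 * ψ x

lemma eventuallyEq_zero_deriv_nhdsGT {ψ : ℝ → ℝ} {a : ℝ} (hψ : ψ =ᶠ[𝓝[>] a] 0) :
    deriv ψ =ᶠ[𝓝[>] a] 0 := by
  filter_upwards [eventually_eventually_nhdsWithin.2 hψ, self_mem_nhdsWithin] with x hx hax
  rw [isOpen_Ioi.nhdsWithin_eq hax] at hx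
  simpa using EventuallyEq.deriv_eq (f := 0) hx

lemma eventuallyEq_zero_nhdsGT_of_tsupport_subset_Ioi {ψ : ℝ → ℝ} {a : ℝ}
    (hψ : tsupport ψ ⊆ Ioi a) : ψ =ᶠ[𝓝[>] a] 0 :=
  (notMem_tsupport_iff_eventuallyEq.1 fun ha => lt_irrefl a (mem_Ioi.1 (hψ ha))).filter_mono
    nhdsWithin_le_nhds

lemma continuousOn_besselOperator {ν : ℝ} {ψ : ℝ → ℝ} (hψ : ContDiffOn ℝ 2 ψ (Ioi 0)) :
    ContinuousOn (besselOperator ν ψ) (Ioi 0) := by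
  have hψ'' : ContinuousOn (deriv (deriv ψ)) (Ioi 0) :=
    (hψ.deriv_of_isOpen (m := 1) isOpen_Ioi (by norm_num)).continuousOn_deriv_of_isOpen
      isOpen_Ioi le_rfl
  have hpotential : ContinuousOn (fun x : ℝ => (ν ^ 2 - 1 / 4) / x ^ 2) (Ioi 0) :=
    continuousOn_const.div (continuousOn_pow 2) fun x hx => pow_ne_zero 2 hx.ne'
  exact hψ''.neg.add (hpotential.mul hψ.continuousOn)

lemma isBesselSolution_besselOperator {ν : ℝ} {ψ : ℝ → ℝ} (hψ : ContDiffOn ℝ 2 ψ (Ioi 0))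
    (hψ0 : ψ =ᶠ[𝓝[>] 0] 0) : IsBesselSolution ν ψ (deriv ψ) (besselOperator ν ψ) := by
  have hψ' : ContDiffOn ℝ 1 (deriv ψ) (Ioi 0) := hψ.deriv_of_isOpen isOpen_Ioi (by norm_num)
  refine ⟨fun x hx => ?_, fun x hx => ?_, continuousOn_besselOperator hψ,
    hψ0.and (eventuallyEq_zero_deriv_nhdsGT hψ0)⟩
  · exact ((hψ.differentiableOn two_ne_zero).differentiableAt (Ioi_mem_nhds hx)).hasDerivAt
  · refine ((hψ'.differentiableOn one_ne_zero).differentiableAt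
      (Ioi_mem_nhds hx)).hasDerivAt.congr_deriv ?_
    rw [besselOperator]
    ring

lemma tendsto_eLpNorm_besselOperator_sub {ν b C : ℝ} {V : ℝ → ℝ} {φ : ℕ → ℝ → ℝ}
    (hV : ContinuousOn V (Ioi 0)) (hVC : ∀ x ∈ Ioc 0 b, |V x| ≤ C)
    (hφ : ∀ n, ContDiffOn ℝ 2 (φ n) (Ioi 0)) (hC1 : CauchyInL2 φ)
    (hC2 : CauchyInL2 fun n x =>
      -(deriv (deriv (φ n)) x) + ((ν ^ 2 - 1 / 4) / x ^ 2 + V x) * φ n x) :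
    Tendsto (fun q : ℕ × ℕ => eLpNorm (besselOperator ν (φ q.1) - besselOperator ν (φ q.2)) 2
      (volume.restrict (Ioc 0 b))) (atTop ×ˢ atTop) (𝓝 0) := by
  have hmeas : ∀ {h : ℝ → ℝ}, ContinuousOn h (Ioi 0) →
      AEStronglyMeasurable h (volume.restrict (Ioc 0 b)) := fun hh =>
    (hh.mono Ioc_subset_Ioi_self).aestronglyMeasurable measurableSet_Ioc
  have hsplit : (fun n x =>
      -(deriv (deriv (φ n)) x) + ((ν ^ 2 - 1 / 4) / x ^ 2 + V x) * φ n x) =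
        fun n => besselOperator ν (φ n) + V * φ n := by
    ext n x
    simp only [besselOperator, Pi.add_apply, Pi.mul_apply]
    ring
  rw [hsplit] at hC2
  have hlim := hC1.tendsto_eLpNorm_sub_mul_sub hC2 measurableSet_Ioc Ioc_subset_Ioi_self
    (fun n => hmeas (hφ n).continuousOn)
    (fun n => hmeas ((continuousOn_besselOperator (hφ n)).add (hV.mul (hφ n).continuousOn)))
    (hmeas hV) hVC
  simpa only [add_sub_cancel_right] using hlim

lemma CauchyInL2.exists_limit_isLittleO_rpow {φ : ℕ → ℝ → ℝ} {F : ℝ → ℝ} {p b : ℝ}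
    (hφ : CauchyInL2 φ) (hmem : ∀ n, MemLp (φ n) 2 (volume.restrict (Ioi 0))) (hb : 0 < b)
    (hF : ∀ x ∈ Ioc 0 b, Tendsto (fun n => x ^ (-p) * φ n x) atTop (𝓝 (F x)))
    (hF0 : Tendsto F (𝓝[>] 0) (𝓝 0)) :
    ∃ φlim : ℝ → ℝ,
      Tendsto (fun n => eLpNorm (fun x => φ n x - φlim x) 2 (volume.restrict (Ioi 0)))
        atTop (𝓝 0) ∧
      φlim =o[𝓝[>] 0] fun x : ℝ => x ^ p := by
  have hpointwise : ∀ x ∈ Ioc 0 b, Tendsto (fun n => φ n x) atTop (𝓝 (x ^ p * F x)) :=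
    fun x hx => ((hF x hx).const_mul (x ^ p)).congr fun n => by
      rw [← mul_assoc, ← Real.rpow_add hx.1, add_neg_cancel, Real.rpow_zero, one_mul]
  obtain ⟨φlim, hlim, heq⟩ := hφ.exists_tendsto_eLpNorm_sub_eqOn hmem hpointwise
  refine ⟨φlim, hlim, ?_⟩
  have hlittle : (fun x : ℝ => x ^ p * F x) =o[𝓝[>] 0] fun x : ℝ => x ^ p * 1 :=
    (isBigO_refl _ _).mul_isLittleO ((isLittleO_one_iff ℝ).2 hF0)
  simp only [mul_one] at hlittle
  exact hlittle.congr' (heq.symm.eventuallyEq_of_mem (Ioc_mem_nhdsGT hb)) EventuallyEq.rfl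

theorem statement8_general (ν : ℝ) (hν : -1 < ν) (hν1 : ν < 1) (V : ℝ → ℝ) (C : ℝ)
    (hV : ContinuousOn V (Ioi 0)) (hVC : ∀ x ∈ Ioc 0 1, |V x| ≤ C) (φ : ℕ → ℝ → ℝ)
    (hφ : ∀ n, ContDiffOn ℝ 2 (φ n) (Ioi 0)) (hφ0 : ∀ n, φ n =ᶠ[𝓝[>] 0] 0)
    (hmem : ∀ n, MemLp (φ n) 2 (volume.restrict (Ioi 0)))
    (hC1 : CauchyInL2 φ)
    (hC2 : CauchyInL2 (fun n x =>
      -(deriv (deriv (φ n)) x) + ((ν ^ 2 - 1 / 4) / x ^ 2 + V x) * φ n x)) :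
    ∃ F G : ℝ → ℝ,
      TendstoUniformlyOn (fun n x => x ^ (-ν - 1 / 2) * φ n x) F atTop (Ioc (0:ℝ) 1) ∧
      TendstoUniformlyOn (fun n x => x ^ (-ν + 1 / 2) * deriv (φ n) x) G atTop (Ioc (0:ℝ) 1) ∧
      ContinuousOn F (Ioc (0:ℝ) 1) ∧ ContinuousOn G (Ioc (0:ℝ) 1) ∧
      Tendsto F (𝓝[>] 0) (𝓝 0) ∧ Tendsto G (𝓝[>] 0) (𝓝 0) ∧
      ∃ φlim : ℝ → ℝ,
        Tendsto (fun n => eLpNorm (fun x => φ n x - φlim x) 2 (volume.restrict (Ioi (0:ℝ))))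
          atTop (𝓝 0) ∧
        φlim =o[𝓝[>] 0] fun x : ℝ => x ^ (ν + 1 / 2) := by
  have hsol := fun n => isBesselSolution_besselOperator (ν := ν) (hφ n) (hφ0 n)
  have hcauchy := tendsto_eLpNorm_besselOperator_sub hV hVC hφ hC1 hC2
  have hmem0 : Ioc (0:ℝ) 1 ∈ 𝓝[>] 0 := Ioc_mem_nhdsGT one_pos
  obtain ⟨F, hF, hFcont, hF0⟩ := exists_tendstoUniformlyOn_of_uniformCauchySeqOn
    (IsBesselSolution.uniformCauchySeqOn_rpow_mul hsol hν hν1 hcauchy)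
    (fun n => ((hsol n).continuousOn_rpow_mul _).mono Ioc_subset_Ioi_self) hmem0
    (fun n => (hsol n).tendsto_rpow_mul _)
  obtain ⟨G, hG, hGcont, hG0⟩ := exists_tendstoUniformlyOn_of_uniformCauchySeqOn
    (IsBesselSolution.uniformCauchySeqOn_rpow_mul_deriv hsol hν hν1 hcauchy)
    (fun n => ((hsol n).continuousOn_rpow_mul_deriv _).mono Ioc_subset_Ioi_self) hmem0
    (fun n => (hsol n).tendsto_rpow_mul_deriv _)
  refine ⟨F, G, hF, hG, hFcont, hGcont, hF0, hG0,
    hC1.exists_limit_isLittleO_rpow hmem one_pos (fun x hx => ?_) hF0⟩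
  rw [neg_add']
  exact hF.tendsto_at hx

theorem statement8 (ν : ℝ) (hν : 1/2 < ν) (hν1 : ν < 1)
    (φ : ℕ → ℝ → ℝ)
    (hsmooth : ∀ n, ContDiff ℝ (⊤ : ℕ∞) (φ n))
    (hsupp : ∀ n, HasCompactSupport (φ n))
    (hsupp' : ∀ n, tsupport (φ n) ⊆ Ioi (0:ℝ))
    (hC1 : CauchyInL2 φ)
    (hC2 : CauchyInL2 (fun n x =>
      -(deriv (deriv (φ n)) x) + ((ν ^ 2 - 1/4) / x ^ 2 + x ^ 2) * φ n x)) :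
    ∃ F G : ℝ → ℝ,
      TendstoUniformlyOn (fun n x => x ^ (-ν - 1/2) * φ n x) F atTop (Ioc (0:ℝ) 1) ∧
      TendstoUniformlyOn (fun n x => x ^ (-ν + 1/2) * deriv (φ n) x) G atTop (Ioc (0:ℝ) 1) ∧
      ContinuousOn F (Ioc (0:ℝ) 1) ∧ ContinuousOn G (Ioc (0:ℝ) 1) ∧
      Tendsto F (𝓝[>] 0) (𝓝 0) ∧ Tendsto G (𝓝[>] 0) (𝓝 0) ∧
      ∃ φlim : ℝ → ℝ,
        Tendsto (fun n => eLpNorm (fun x => φ n x - φlim x) 2 (volume.restrict (Ioi (0:ℝ))))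
          atTop (𝓝 0) ∧
        φlim =o[𝓝[>] 0] fun x : ℝ => x ^ (ν + 1/2) :=
  statement8_general ν (by linarith) hν1 (fun x => x ^ 2) 1 (continuousOn_pow 2)
    (fun x hx => by simpa [abs_of_pos hx.1] using hx.2) φ
    (fun n => (contDiff_infty.1 (hsmooth n) 2).contDiffOn)
    (fun n => eventuallyEq_zero_nhdsGT_of_tsupport_subset_Ioi (hsupp' n))
    (fun n => ((hsmooth n).continuous.memLp_of_hasCompactSupport (hsupp n)).restrict _) hC1 hC2
end

section
/- Let −1/2 < α < 1/2. Let (φ_{1,n}) and (φ_{2,n}) be sequences of smooth complex functions on (0,∞), each with compact support contained in (0,∞), such that the four sequences (φ_{1,n}), (φ_{2,n}), (D₁φ_{1,n}) and (D₂φ_{2,n}) are all Cauchy in L²(0,∞). Then the sequences of functions x ↦ x^{−α}·φ_{1,n}(x) and x ↦ x^{α}·φ_{2,n}(x) converge uniformly on (0,1], and their uniform limits extend to continuous functions on [0,1] that vanish at x = 0. -/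
open MeasureTheory Set Filter Topology

/-- A sequence of complex functions is Cauchy in `L²(0,∞)`. -/
def CauchyInL2C (f : ℕ → ℝ → ℂ) : Prop :=
  ∀ ε : ENNReal, 0 < ε → ∃ N : ℕ, ∀ m ≥ N, ∀ n ≥ N,
    eLpNorm (fun x => f m x - f n x) 2 (volume.restrict (Ioi (0:ℝ))) < ε

/-- `D₁φ = (-φ' + (α/x - x)·φ)/√2`. -/
noncomputable def D1 (α : ℝ) (f : ℝ → ℂ) : ℝ → ℂ :=
  fun x => (-(deriv f x) + ((α / x - x : ℝ) : ℂ) * f x) / (Real.sqrt 2 : ℂ)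

/-- `D₂φ = (φ' + (α/x - x)·φ)/√2`. -/
noncomputable def D2 (α : ℝ) (f : ℝ → ℂ) : ℝ → ℂ :=
  fun x => (deriv f x + ((α / x - x : ℝ) : ℂ) * f x) / (Real.sqrt 2 : ℂ)

/-!
For `x > 0` one has `(x ^ β * φ)' = x ^ β * (φ' + (β / x) * φ)`. The operator `φ' + (β / x) * φ` is
`-√2 D₁ φ - x φ` for `β = -α` and `√2 D₂ φ + x φ` for `β = α`. Multiplication by `x` is bounded on
`(0, b]`, so the images of `φ₁ₙ`, resp. `φ₂ₙ`, under it are Cauchy in `L²(0, b)`. When `β > -1/2`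
the weight `x ^ β` is square integrable near `0`, so by Cauchy–Schwarz the derivatives of
`x ^ β * φₙ` are Cauchy in `L¹(0, b)`. As these functions tend to `0` at the origin, integrating
from `0` makes them uniformly Cauchy.
-/

section Limits

theorem tendsto_mul_nhdsGT_zero_of_tsupport_subset {X R : Type*} [TopologicalSpace X] [Preorder X]
    [TopologicalSpace R] [MulZeroClass R] {f : X → R} {a : X} (hf : tsupport f ⊆ Ioi a)
    (g : X → R) : Tendsto (fun x => g x * f x) (𝓝[>] a) (𝓝 0) := by
  have ha : f =ᶠ[𝓝 a] 0 :=
    notMem_tsupport_iff_eventuallyEq.1 fun h => lt_irrefl a (mem_Ioi.1 (hf h))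
  refine tendsto_const_nhds.congr' ?_
  filter_upwards [nhdsWithin_le_nhds ha] with x hx
  rw [hx, Pi.zero_apply, mul_zero]

theorem uniformCauchySeqOn_of_edist_le {ι X E : Type*} [PseudoEMetricSpace E] {u : ι → X → E}
    {l : Filter ι} {s : Set X} {B : ι × ι → ENNReal} (hB : Tendsto B (l ×ˢ l) (𝓝 0))
    (hu : ∀ i j, ∀ x ∈ s, edist (u i x) (u j x) ≤ B (i, j)) : UniformCauchySeqOn u l s := by
  intro V hV
  obtain ⟨ε, hε, hεV⟩ := mem_uniformity_edist.1 hV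
  filter_upwards [hB.eventually_lt_const hε] with ij hij x hx
  exact hεV ((hu _ _ x hx).trans_lt hij)

theorem exists_tendstoUniformlyOn_of_uniformCauchySeqOn_s9 {ι X E : Type*} [UniformSpace E]
    [CompleteSpace E] {u : ι → X → E} {l : Filter ι} [l.NeBot] {s : Set X}
    (hu : UniformCauchySeqOn u l s) : ∃ F, TendstoUniformlyOn u F l s := by
  obtain ⟨i⟩ := l.nonempty_of_neBot
  have hlim (x : X) : ∃ y, x ∈ s → Tendsto (u · x) l (𝓝 y) := by
    by_cases hx : x ∈ s
    · obtain ⟨y, hy⟩ := CompleteSpace.complete (hu.cauchy_map hx)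
      exact ⟨y, fun _ => hy⟩
    · exact ⟨u i x, fun h => absurd h hx⟩
  choose F hF using hlim
  exact ⟨F, hu.tendstoUniformlyOn_of_tendsto hF⟩

theorem exists_tendstoUniformlyOn_continuousOn_insert {ι X E : Type*} [TopologicalSpace X]
    [T1Space X] [UniformSpace E] [CompleteSpace E] [T2Space E] {u : ι → X → E} {l : Filter ι}
    [l.NeBot] {s : Set X} {a : X} {y : E} (ha : a ∉ s) (hcont : ∀ i, ContinuousOn (u i) s)
    (hlim : ∀ i, Tendsto (u i) (𝓝[s] a) (𝓝 y)) (hu : UniformCauchySeqOn u l s) :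
    ∃ F, TendstoUniformlyOn u F l s ∧ ContinuousOn F (insert a s) ∧ F a = y := by
  classical
  let v (i : ι) : X → E := Function.update (u i) a y
  have hva (i : ι) : v i a = y := Function.update_self ..
  have hvs (i : ι) : EqOn (v i) (u i) s := fun x hx =>
    Function.update_of_ne (ne_of_mem_of_not_mem hx ha) ..
  have hvcont (i : ι) : ContinuousOn (v i) (insert a s) := by
    rw [continuousOn_update_iff, insert_sdiff_self_of_notMem ha]
    exact ⟨hcont i, fun _ => hlim i⟩
  have hv : UniformCauchySeqOn v l (insert a s) := by
    intro V hV
    filter_upwards [hu V hV] with ij hij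
    rintro x (rfl | hx)
    · simpa only [hva] using refl_mem_uniformity hV
    · simpa only [hvs _ hx] using hij x hx
  obtain ⟨F, hF⟩ := exists_tendstoUniformlyOn_of_uniformCauchySeqOn_s9 hv
  refine ⟨F, (hF.mono (subset_insert a s)).congr (.of_forall hvs),
    hF.continuousOn (.of_forall hvcont), ?_⟩
  have hFa : Tendsto (v · a) l (𝓝 (F a)) := hF.tendsto_at (mem_insert a s)
  simp only [hva] at hFa
  exact tendsto_nhds_unique hFa tendsto_const_nhds

end Limits

section CauchyInLp

variable {X E : Type*} [MeasurableSpace X] [NormedAddCommGroup E] {f g : ℕ → X → E}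
  {p : ENNReal} {μ ν : Measure X}

/-- A sequence of functions is Cauchy for the `Lᵖ(μ)` seminorm. The functions themselves need not
lie in `Lᵖ`: only their differences are measured. -/
def CauchyInLp (f : ℕ → X → E) (p : ENNReal) (μ : Measure X) : Prop :=
  Tendsto (fun ij : ℕ × ℕ => eLpNorm (fun x => f ij.1 x - f ij.2 x) p μ) (atTop ×ˢ atTop) (𝓝 0)

theorem CauchyInLp.mono_measure (hf : CauchyInLp f p ν) (hμν : μ ≤ ν) : CauchyInLp f p μ :=
  tendsto_of_tendsto_of_tendsto_of_le_of_le tendsto_const_nhds hf (fun _ => zero_le)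
    fun _ => eLpNorm_mono_measure _ hμν

theorem CauchyInLp.add (hf : CauchyInLp f p μ) (hg : CauchyInLp g p μ) (hp : 1 ≤ p)
    (hfm : ∀ n, AEStronglyMeasurable (f n) μ) (hgm : ∀ n, AEStronglyMeasurable (g n) μ) :
    CauchyInLp (fun n x => f n x + g n x) p μ := by
  have hsum := Tendsto.add hf hg
  rw [add_zero] at hsum
  refine tendsto_of_tendsto_of_tendsto_of_le_of_le tendsto_const_nhds hsum (fun _ => zero_le)
    fun ij => ?_
  simp only [add_sub_add_comm]
  exact eLpNorm_add_le ((hfm _).sub (hfm _)) ((hgm _).sub (hgm _)) hp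

theorem CauchyInLp.bdd_smul {𝕜 : Type*} [NormedRing 𝕜] [Module 𝕜 E] [IsBoundedSMul 𝕜 E]
    {w : X → 𝕜} {C : ℝ} (hf : CauchyInLp f p μ) (hw : ∀ᵐ x ∂μ, ‖w x‖ ≤ C) :
    CauchyInLp (fun n x => w x • f n x) p μ := by
  have hC : Tendsto (fun ij : ℕ × ℕ =>
      ENNReal.ofReal C * eLpNorm (fun x => f ij.1 x - f ij.2 x) p μ) (atTop ×ˢ atTop) (𝓝 0) := by
    simpa only [mul_zero] using ENNReal.Tendsto.const_mul hf (.inr ENNReal.ofReal_ne_top)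
  refine tendsto_of_tendsto_of_tendsto_of_le_of_le tendsto_const_nhds hC (fun _ => zero_le)
    fun ij => eLpNorm_le_mul_eLpNorm_of_ae_le_mul ?_ p
  filter_upwards [hw] with x hx
  rw [← smul_sub]
  exact (norm_smul_le _ _).trans (by gcongr)

theorem CauchyInL2C.cauchyInLp {f : ℕ → ℝ → ℂ} (hf : CauchyInL2C f) :
    CauchyInLp f 2 (volume.restrict (Ioi 0)) := by
  rw [CauchyInLp, prod_atTop_atTop_eq, ENNReal.tendsto_atTop_zero]
  intro ε hε
  obtain ⟨N, hN⟩ := hf ε hε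
  exact ⟨(N, N), fun ij hij => (hN _ hij.1 _ hij.2).le⟩

end CauchyInLp

section ConjugatedDerivative

variable {E : Type*} [NormedAddCommGroup E] [NormedSpace ℝ E] {β b x : ℝ} {f g : ℝ → E}

/-- The derivative conjugated by a power weight, `x ^ (-β) * (d/dx) (x ^ β * f)`, in expanded
form. Up to constant factors it is the singular part of `D₁` (for `β = -α`) and of `D₂` (for
`β = α`) at the origin. -/
noncomputable def conjDeriv (β : ℝ) (f : ℝ → E) (x : ℝ) : E :=
  deriv f x + (β / x) • f x

theorem conjDeriv_sub (hf : DifferentiableAt ℝ f x) (hg : DifferentiableAt ℝ g x) :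
    conjDeriv β (fun t => f t - g t) x = conjDeriv β f x - conjDeriv β g x := by
  simp only [conjDeriv, deriv_fun_sub hf hg, smul_sub, add_sub_add_comm]

theorem deriv_rpow_smul (hx : 0 < x) (hf : DifferentiableAt ℝ f x) :
    deriv (fun t => t ^ β • f t) x = x ^ β • conjDeriv β f x := by
  have hpow := Real.hasDerivAt_rpow_const (p := β) (Or.inl hx.ne')
  rw [(hpow.fun_smul hf.hasDerivAt).deriv, conjDeriv, smul_add, smul_smul,
    Real.rpow_sub_one hx.ne', mul_div_left_comm]

theorem contDiffOn_rpow_smul {n : WithTop ℕ∞} (hf : ContDiffOn ℝ n f (Ioi 0)) :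
    ContDiffOn ℝ n (fun t => t ^ β • f t) (Ioi 0) :=
  (contDiffOn_id.rpow_const_of_ne fun _ ht => ne_of_gt ht).smul hf

theorem memLp_rpow_Ioc {q : ENNReal} (hq : q ≠ 0) (hq' : q ≠ ⊤) (hβ : -1 < β * q.toReal) :
    MemLp (fun t : ℝ => t ^ β) q (volume.restrict (Ioc 0 b)) := by
  rw [← integrable_norm_rpow_iff (by fun_prop) hq hq']
  have hint : IntegrableOn (fun t : ℝ => t ^ (β * q.toReal)) (Ioc 0 b) :=
    (intervalIntegral.intervalIntegrable_rpow' hβ).1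
  refine hint.congr_fun (fun t ht => ?_) measurableSet_Ioc
  simp only [Real.norm_of_nonneg (Real.rpow_nonneg ht.1.le _), Real.rpow_mul ht.1.le]

theorem enorm_le_lintegral_enorm_deriv_of_tendsto_zero {a : ℝ} (hax : a < x)
    (hf : ContDiffOn ℝ 1 f (Ioi a)) (hlim : Tendsto f (𝓝[>] a) (𝓝 0)) :
    ‖f x‖ₑ ≤ ∫⁻ t in Ioc a x, ‖deriv f t‖ₑ := by
  have hsub : Tendsto (fun s => ‖f x - f s‖ₑ) (𝓝[>] a) (𝓝 ‖f x‖ₑ) := by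
    simpa only [sub_zero] using (tendsto_const_nhds.sub hlim).enorm
  refine le_of_tendsto hsub ?_
  filter_upwards [Ioo_mem_nhdsGT hax] with s hs
  calc ‖f x - f s‖ₑ ≤ ∫⁻ t in Icc s x, ‖deriv f t‖ₑ :=
        enorm_sub_le_lintegral_deriv_of_contDiffOn_Icc
          (hf.mono fun t ht => hs.1.trans_le ht.1) hs.2.le
    _ ≤ ∫⁻ t in Ioc a x, ‖deriv f t‖ₑ :=
        lintegral_mono_set fun t ht => ⟨hs.1.trans_le ht.1, ht.2⟩

theorem aestronglyMeasurable_conjDeriv [CompleteSpace E] {μ : Measure ℝ}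
    (hf : AEStronglyMeasurable f μ) :
    AEStronglyMeasurable (conjDeriv β f) μ :=
  (stronglyMeasurable_deriv f).aestronglyMeasurable.add
    ((measurable_const.div measurable_id).aestronglyMeasurable.smul hf)

theorem enorm_rpow_smul_le_eLpNorm_mul_eLpNorm [CompleteSpace E] {p q : ENNReal}
    [q.HolderConjugate p] (hf : ContDiffOn ℝ 1 f (Ioi 0))
    (hlim : Tendsto (fun t => t ^ β • f t) (𝓝[>] 0) (𝓝 0))
    (hx : x ∈ Ioc 0 b) :
    ‖x ^ β • f x‖ₑ ≤ eLpNorm (fun t : ℝ => t ^ β) q (volume.restrict (Ioc 0 b)) *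
      eLpNorm (conjDeriv β f) p (volume.restrict (Ioc 0 b)) := by
  have hfm : AEStronglyMeasurable f (volume.restrict (Ioc 0 b)) :=
    (hf.continuousOn.mono Ioc_subset_Ioi_self).aestronglyMeasurable measurableSet_Ioc
  calc ‖x ^ β • f x‖ₑ
      ≤ ∫⁻ t in Ioc 0 x, ‖deriv (fun t => t ^ β • f t) t‖ₑ :=
        enorm_le_lintegral_enorm_deriv_of_tendsto_zero hx.1 (contDiffOn_rpow_smul hf) hlim
    _ ≤ ∫⁻ t in Ioc 0 b, ‖deriv (fun t => t ^ β • f t) t‖ₑ :=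
        lintegral_mono_set (Ioc_subset_Ioc_right hx.2)
    _ = ∫⁻ t in Ioc 0 b, ‖t ^ β • conjDeriv β f t‖ₑ :=
        setLIntegral_congr_fun measurableSet_Ioc fun t ht => by
          rw [deriv_rpow_smul ht.1
            ((hf.differentiableOn one_ne_zero).differentiableAt (Ioi_mem_nhds ht.1))]
    _ = eLpNorm ((fun t : ℝ => t ^ β) • conjDeriv β f) 1 (volume.restrict (Ioc 0 b)) :=
        eLpNorm_one_eq_lintegral_enorm.symm
    _ ≤ _ := eLpNorm_smul_le_mul_eLpNorm (aestronglyMeasurable_conjDeriv hfm) (by fun_prop)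

theorem uniformCauchySeqOn_rpow_smul [CompleteSpace E] {p q : ENNReal} [q.HolderConjugate p]
    {f : ℕ → ℝ → E} (hβ : MemLp (fun t : ℝ => t ^ β) q (volume.restrict (Ioc 0 b)))
    (hf : ∀ n, ContDiffOn ℝ 1 (f n) (Ioi 0))
    (hlim : ∀ n, Tendsto (fun t => t ^ β • f n t) (𝓝[>] 0) (𝓝 0))
    (hC : CauchyInLp (fun n => conjDeriv β (f n)) p (volume.restrict (Ioc 0 b))) :
    UniformCauchySeqOn (fun n x => x ^ β • f n x) atTop (Ioc 0 b) := by
  have hB := ENNReal.Tendsto.const_mul hC (.inr hβ.eLpNorm_ne_top)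
  rw [mul_zero] at hB
  refine uniformCauchySeqOn_of_edist_le hB fun i j x hx => ?_
  have hdiff (n : ℕ) {t : ℝ} (ht : 0 < t) : DifferentiableAt ℝ (f n) t :=
    ((hf n).differentiableOn one_ne_zero).differentiableAt (Ioi_mem_nhds ht)
  have hlim_sub : Tendsto (fun t => t ^ β • (f i t - f j t)) (𝓝[>] 0) (𝓝 0) := by
    simpa only [smul_sub, sub_zero] using (hlim i).sub (hlim j)
  have hconj : eLpNorm (conjDeriv β fun t => f i t - f j t) p (volume.restrict (Ioc 0 b)) =
      eLpNorm (fun t => conjDeriv β (f i) t - conjDeriv β (f j) t) p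
        (volume.restrict (Ioc 0 b)) := by
    refine eLpNorm_congr_ae ?_
    filter_upwards [ae_restrict_mem measurableSet_Ioc] with t ht
    exact conjDeriv_sub (hdiff i ht.1) (hdiff j ht.1)
  rw [edist_eq_enorm_sub, ← smul_sub, ← hconj]
  exact enorm_rpow_smul_le_eLpNorm_mul_eLpNorm ((hf i).sub (hf j)) hlim_sub hx

theorem exists_tendstoUniformlyOn_rpow_smul [CompleteSpace E] {p q : ENNReal}
    [q.HolderConjugate p] {f : ℕ → ℝ → E}
    (hβ : MemLp (fun t : ℝ => t ^ β) q (volume.restrict (Ioc 0 b)))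
    (hf : ∀ n, ContDiffOn ℝ 1 (f n) (Ioi 0))
    (hlim : ∀ n, Tendsto (fun t => t ^ β • f n t) (𝓝[>] 0) (𝓝 0))
    (hC : CauchyInLp (fun n => conjDeriv β (f n)) p (volume.restrict (Ioc 0 b))) :
    ∃ F, TendstoUniformlyOn (fun n x => x ^ β • f n x) F atTop (Ioc 0 b) ∧
      ContinuousOn F (Icc 0 b) ∧ F 0 = 0 := by
  obtain ⟨F, hF, hFcont, hF0⟩ := exists_tendstoUniformlyOn_continuousOn_insert
    (a := 0) (y := 0) (by simp)
    (fun n => (contDiffOn_rpow_smul (hf n)).continuousOn.mono Ioc_subset_Ioi_self)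
    (fun n => (hlim n).mono_left (nhdsWithin_mono 0 Ioc_subset_Ioi_self))
    (uniformCauchySeqOn_rpow_smul hβ hf hlim hC)
  have hIcc : Icc 0 b ⊆ insert 0 (Ioc 0 b) := fun x hx =>
    hx.1.eq_or_lt'.imp id fun h => ⟨h, hx.2⟩
  exact ⟨F, hF, hFcont.mono hIcc, hF0⟩

end ConjugatedDerivative

section Supercharge

variable {α b : ℝ} {f : ℝ → ℂ} {φ ψ : ℕ → ℝ → ℂ}

theorem conjDeriv_neg_eq_D1 (α : ℝ) (f : ℝ → ℂ) :
    conjDeriv (-α) f = fun x => (-√2) • D1 α f x + (-x) • f x := by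
  ext x
  have h2 : (√2 : ℂ) ≠ 0 := by simp
  simp only [conjDeriv, D1, Complex.real_smul, Complex.ofReal_neg, Complex.ofReal_div,
    Complex.ofReal_sub, neg_mul, mul_div_cancel₀ _ h2]
  ring

theorem conjDeriv_eq_D2 (α : ℝ) (f : ℝ → ℂ) :
    conjDeriv α f = fun x => √2 • D2 α f x + x • f x := by
  ext x
  have h2 : (√2 : ℂ) ≠ 0 := by simp
  simp only [conjDeriv, D2, Complex.real_smul, Complex.ofReal_div, Complex.ofReal_sub,
    mul_div_cancel₀ _ h2]
  ring

theorem aestronglyMeasurable_D1 {μ : Measure ℝ} (hf : AEStronglyMeasurable f μ) :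
    AEStronglyMeasurable (D1 α f) μ := by
  have := measurable_deriv f
  unfold D1
  fun_prop

theorem aestronglyMeasurable_D2 {μ : Measure ℝ} (hf : AEStronglyMeasurable f μ) :
    AEStronglyMeasurable (D2 α f) μ := by
  have := measurable_deriv f
  unfold D2
  fun_prop

theorem cauchyInLp_smul_add_smul_of_cauchyInL2C {c C : ℝ} {w : ℝ → ℝ} (hw : Measurable w)
    (hwC : ∀ x ∈ Ioc 0 b, ‖w x‖ ≤ C) (hφ : CauchyInL2C φ) (hψ : CauchyInL2C ψ)
    (hφm : ∀ n, AEStronglyMeasurable (φ n) (volume.restrict (Ioi 0)))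
    (hψm : ∀ n, AEStronglyMeasurable (ψ n) (volume.restrict (Ioi 0))) :
    CauchyInLp (fun n x => c • ψ n x + w x • φ n x) 2 (volume.restrict (Ioc 0 b)) := by
  have hle : volume.restrict (Ioc 0 b) ≤ volume.restrict (Ioi 0) :=
    Measure.restrict_mono Ioc_subset_Ioi_self le_rfl
  exact ((hψ.cauchyInLp.mono_measure hle).bdd_smul (.of_forall fun _ => le_rfl)).add
    ((hφ.cauchyInLp.mono_measure hle).bdd_smul (ae_restrict_of_forall_mem measurableSet_Ioc hwC))
    one_le_two (fun n => ((hψm n).mono_measure hle).const_smul c)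
    fun n => hw.aestronglyMeasurable.smul ((hφm n).mono_measure hle)

theorem cauchyInLp_conjDeriv_neg_of_D1
    (hφm : ∀ n, AEStronglyMeasurable (φ n) (volume.restrict (Ioi 0)))
    (hφ : CauchyInL2C φ) (hD : CauchyInL2C fun n => D1 α (φ n)) :
    CauchyInLp (fun n => conjDeriv (-α) (φ n)) 2 (volume.restrict (Ioc 0 b)) := by
  simp only [conjDeriv_neg_eq_D1]
  have hbound : ∀ x ∈ Ioc 0 b, ‖-x‖ ≤ b := fun x hx => by
    rw [norm_neg, Real.norm_of_nonneg hx.1.le]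
    exact hx.2
  exact cauchyInLp_smul_add_smul_of_cauchyInL2C measurable_neg hbound hφ hD hφm
    fun n => aestronglyMeasurable_D1 (hφm n)

theorem cauchyInLp_conjDeriv_of_D2
    (hφm : ∀ n, AEStronglyMeasurable (φ n) (volume.restrict (Ioi 0)))
    (hφ : CauchyInL2C φ) (hD : CauchyInL2C fun n => D2 α (φ n)) :
    CauchyInLp (fun n => conjDeriv α (φ n)) 2 (volume.restrict (Ioc 0 b)) := by
  simp only [conjDeriv_eq_D2]
  have hbound : ∀ x ∈ Ioc 0 b, ‖x‖ ≤ b := fun x hx => by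
    rw [Real.norm_of_nonneg hx.1.le]
    exact hx.2
  exact cauchyInLp_smul_add_smul_of_cauchyInL2C measurable_id hbound hφ hD hφm
    fun n => aestronglyMeasurable_D2 (hφm n)

end Supercharge

theorem statement9_general (α b : ℝ) (hα1 : -(1 / 2) < α) (hα2 : α < 1 / 2)
    (φ₁ φ₂ : ℕ → ℝ → ℂ)
    (hdiff1 : ∀ n, ContDiffOn ℝ 1 (φ₁ n) (Ioi 0))
    (hdiff2 : ∀ n, ContDiffOn ℝ 1 (φ₂ n) (Ioi 0))
    (hlim1 : ∀ n, Tendsto (fun x => ((x ^ (-α) : ℝ) : ℂ) * φ₁ n x) (𝓝[>] 0) (𝓝 0))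
    (hlim2 : ∀ n, Tendsto (fun x => ((x ^ α : ℝ) : ℂ) * φ₂ n x) (𝓝[>] 0) (𝓝 0))
    (hC1 : CauchyInL2C φ₁) (hC2 : CauchyInL2C φ₂)
    (hC3 : CauchyInL2C (fun n => D1 α (φ₁ n)))
    (hC4 : CauchyInL2C (fun n => D2 α (φ₂ n))) :
    ∃ F G : ℝ → ℂ,
      TendstoUniformlyOn (fun n x => ((x ^ (-α) : ℝ) : ℂ) * φ₁ n x) F atTop (Ioc 0 b) ∧
      TendstoUniformlyOn (fun n x => ((x ^ α : ℝ) : ℂ) * φ₂ n x) G atTop (Ioc 0 b) ∧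
      ContinuousOn F (Icc 0 b) ∧ ContinuousOn G (Icc 0 b) ∧
      F 0 = 0 ∧ G 0 = 0 := by
  have hmeas {f : ℝ → ℂ} (hf : ContDiffOn ℝ 1 f (Ioi 0)) :
      AEStronglyMeasurable f (volume.restrict (Ioi 0)) :=
    hf.continuousOn.aestronglyMeasurable measurableSet_Ioi
  have hweight {β : ℝ} (hβ : -(1 / 2) < β) :
      MemLp (fun t : ℝ => t ^ β) 2 (volume.restrict (Ioc 0 b)) :=
    memLp_rpow_Ioc two_ne_zero ENNReal.ofNat_ne_top (by rw [ENNReal.toReal_ofNat]; linarith)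
  simp only [← Complex.real_smul] at hlim1 hlim2 ⊢
  obtain ⟨F, hF, hFcont, hF0⟩ := exists_tendstoUniformlyOn_rpow_smul
    (hweight (neg_lt_neg hα2)) hdiff1 hlim1
    (cauchyInLp_conjDeriv_neg_of_D1 (fun n => hmeas (hdiff1 n)) hC1 hC3)
  obtain ⟨G, hG, hGcont, hG0⟩ := exists_tendstoUniformlyOn_rpow_smul
    (hweight hα1) hdiff2 hlim2
    (cauchyInLp_conjDeriv_of_D2 (fun n => hmeas (hdiff2 n)) hC2 hC4)
  exact ⟨F, G, hF, hG, hFcont, hGcont, hF0, hG0⟩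

theorem statement9 (α : ℝ) (hα1 : -(1/2) < α) (hα2 : α < 1/2)
    (φ₁ φ₂ : ℕ → ℝ → ℂ)
    (hsmooth1 : ∀ n, ContDiff ℝ (⊤ : ℕ∞) (φ₁ n))
    (hsmooth2 : ∀ n, ContDiff ℝ (⊤ : ℕ∞) (φ₂ n))
    (hsupp1 : ∀ n, HasCompactSupport (φ₁ n))
    (hsupp2 : ∀ n, HasCompactSupport (φ₂ n))
    (hsupp1' : ∀ n, tsupport (φ₁ n) ⊆ Ioi (0:ℝ))
    (hsupp2' : ∀ n, tsupport (φ₂ n) ⊆ Ioi (0:ℝ))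
    (hC1 : CauchyInL2C φ₁) (hC2 : CauchyInL2C φ₂)
    (hC3 : CauchyInL2C (fun n => D1 α (φ₁ n)))
    (hC4 : CauchyInL2C (fun n => D2 α (φ₂ n))) :
    ∃ F G : ℝ → ℂ,
      TendstoUniformlyOn (fun n x => ((x ^ (-α) : ℝ) : ℂ) * φ₁ n x) F atTop (Ioc (0:ℝ) 1) ∧
      TendstoUniformlyOn (fun n x => ((x ^ α : ℝ) : ℂ) * φ₂ n x) G atTop (Ioc (0:ℝ) 1) ∧
      ContinuousOn F (Icc (0:ℝ) 1) ∧ ContinuousOn G (Icc (0:ℝ) 1) ∧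
      F 0 = 0 ∧ G 0 = 0 := by
  exact statement9_general α 1 hα1 hα2 φ₁ φ₂
    (fun n => ((hsmooth1 n).of_le (mod_cast le_top)).contDiffOn)
    (fun n => ((hsmooth2 n).of_le (mod_cast le_top)).contDiffOn)
    (fun n => tendsto_mul_nhdsGT_zero_of_tsupport_subset (hsupp1' n) _)
    (fun n => tendsto_mul_nhdsGT_zero_of_tsupport_subset (hsupp2' n) _) hC1 hC2 hC3 hC4
end

section
/- Let 0 < ν < 1 and let θ ∈ ℝ satisfy θ < −Γ(1−ν)·Γ((1+ν)/2) / (Γ(1+ν)·Γ((1−ν)/2)), where Γ is the real Gamma function. Then there exists λ < 0 such that Γ(ν/2 + 1/2 − λ/4) / Γ(−ν/2 + 1/2 − λ/4) = (Γ(ν)/Γ(−ν))·θ. -/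
/-!
For `0 < b < a` the quotient `Γ (a + s) / Γ (b + s)` is continuous in `s ≥ 0`, and log-convexity of
`Γ` forces it to grow at least like `s ^ (a - b)`; hence on `s > 0` it takes every value above its
value at `s = 0`. Taking `a = (1 + ν) / 2`, `b = (1 - ν) / 2` and `s = -λ / 4`, the threshold on `θ`
says exactly that the right-hand side of the eigenvalue equation exceeds the quotient at `s = 0`.
-/

open Filter Set

/-- The slope of `log Γ` over `[x, x + 1]` is `log x`, and it is at most the slope over
`[x + 1, x + 1 + r]`. -/
lemma rpow_le_Gamma_add_one_add_div_Gamma_add_one {x r : ℝ} (hx : 0 < x) (hr : 0 < r) :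
    x ^ r ≤ Real.Gamma (x + 1 + r) / Real.Gamma (x + 1) := by
  have hΓ : 0 < Real.Gamma x := Real.Gamma_pos_of_pos hx
  have hΓ₁ : 0 < Real.Gamma (x + 1) := Real.Gamma_pos_of_pos (by linarith)
  have hΓr : 0 < Real.Gamma (x + 1 + r) := Real.Gamma_pos_of_pos (by linarith)
  have left_slope : Real.log (Real.Gamma (x + 1)) - Real.log (Real.Gamma x) = Real.log x := by
    rw [Real.Gamma_add_one hx.ne', Real.log_mul hx.ne' hΓ.ne', add_sub_cancel_right]
  have slopes := Real.convexOn_log_Gamma.slope_mono_adjacent (mem_Ioi.2 hx)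
    (mem_Ioi.2 (by linarith : 0 < x + 1 + r)) (lt_add_one x) (lt_add_of_pos_right (x + 1) hr)
  simp only [Function.comp_apply, add_sub_cancel_left, div_one, left_slope] at slopes
  rw [Real.rpow_le_iff_le_log hx (div_pos hΓr hΓ₁), Real.log_div hΓr.ne' hΓ₁.ne', mul_comm]
  exact (le_div_iff₀ hr).1 slopes

lemma tendsto_Gamma_add_div_Gamma_atTop {r : ℝ} (hr : 0 < r) :
    Tendsto (fun x ↦ Real.Gamma (x + r) / Real.Gamma x) atTop atTop := by
  have lower : Tendsto (fun x : ℝ ↦ (x - 1) ^ r) atTop atTop :=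
    (tendsto_rpow_atTop hr).comp (tendsto_atTop_add_const_right atTop (-1) tendsto_id)
  refine tendsto_atTop_mono' atTop ?_ lower
  filter_upwards [eventually_gt_atTop 1] with x hx
  simpa only [sub_add_cancel] using
    rpow_le_Gamma_add_one_add_div_Gamma_add_one (sub_pos.2 hx) hr

lemma continuousOn_Gamma_add_div_Gamma_add {a b : ℝ} (ha : 0 < a) (hb : 0 < b) :
    ContinuousOn (fun s ↦ Real.Gamma (a + s) / Real.Gamma (b + s)) (Ici 0) := by
  have continuousOn_shift {c : ℝ} (hc : 0 < c) :
      ContinuousOn (fun s ↦ Real.Gamma (c + s)) (Ici 0) :=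
    Real.differentiableOn_Gamma_Ioi.continuousOn.comp (by fun_prop)
      fun _ hs ↦ add_pos_of_pos_of_nonneg hc hs
  exact (continuousOn_shift ha).div (continuousOn_shift hb) fun _ hs ↦
    (Real.Gamma_pos_of_pos (add_pos_of_pos_of_nonneg hb hs)).ne'

lemma exists_pos_Gamma_add_div_Gamma_add_eq {a b c : ℝ} (hb : 0 < b) (hab : b < a)
    (hc : Real.Gamma a / Real.Gamma b < c) :
    ∃ s, 0 < s ∧ Real.Gamma (a + s) / Real.Gamma (b + s) = c := by
  have unbounded : Tendsto (fun s ↦ Real.Gamma (a + s) / Real.Gamma (b + s)) atTop atTop := by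
    refine ((tendsto_Gamma_add_div_Gamma_atTop (sub_pos.2 hab)).comp
      (tendsto_atTop_add_const_left atTop b tendsto_id)).congr fun s ↦ ?_
    simp only [Function.comp_apply, id_eq, add_right_comm b s, add_sub_cancel]
  obtain ⟨s, hs, rfl⟩ := isPreconnected_Ici.intermediate_value_Ici self_mem_Ici
    (le_principal_iff.2 (Ici_mem_atTop 0))
    (continuousOn_Gamma_add_div_Gamma_add (hb.trans hab) hb) unbounded
    (mem_Ici.2 (by simpa only [add_zero] using hc.le))
  have hs₀ : s ≠ 0 := by
    rintro rfl
    simp only [add_zero, lt_self_iff_false] at hc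
  exact ⟨s, hs.lt_of_ne' hs₀, rfl⟩

lemma Gamma_div_Gamma_neg {x : ℝ} (hx : x ≠ 0) :
    Real.Gamma x / Real.Gamma (-x) = -(Real.Gamma (1 + x) / Real.Gamma (1 - x)) := by
  rw [add_comm 1 x, sub_eq_neg_add, Real.Gamma_add_one hx, Real.Gamma_add_one (neg_ne_zero.2 hx),
    neg_mul, div_neg, neg_neg, mul_div_mul_left _ _ hx]

theorem statement16 (ν θ : ℝ) (hν0 : 0 < ν) (hν1 : ν < 1)
    (hθ : θ < -(Real.Gamma (1 - ν) * Real.Gamma ((1 + ν) / 2)) /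
      (Real.Gamma (1 + ν) * Real.Gamma ((1 - ν) / 2))) :
    ∃ lam : ℝ, lam < 0 ∧
      Real.Gamma (ν / 2 + 1/2 - lam / 4) / Real.Gamma (-ν / 2 + 1/2 - lam / 4) =
        (Real.Gamma ν / Real.Gamma (-ν)) * θ := by
  have hsub : 0 < Real.Gamma (1 - ν) := Real.Gamma_pos_of_pos (by linarith)
  have hadd : 0 < Real.Gamma (1 + ν) := Real.Gamma_pos_of_pos (by linarith)
  have hhalf : 0 < Real.Gamma ((1 - ν) / 2) := Real.Gamma_pos_of_pos (by linarith)
  have above_value_at_zero : Real.Gamma ((1 + ν) / 2) / Real.Gamma ((1 - ν) / 2) <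
      Real.Gamma ν / Real.Gamma (-ν) * θ := by
    rw [lt_div_iff₀ (mul_pos hadd hhalf)] at hθ
    rw [Gamma_div_Gamma_neg hν0.ne', ← neg_div, div_mul_eq_mul_div, div_lt_div_iff₀ hhalf hsub]
    linarith
  obtain ⟨s, hs, hs_eq⟩ := exists_pos_Gamma_add_div_Gamma_add_eq
    (by linarith : 0 < (1 - ν) / 2) (by linarith : (1 - ν) / 2 < (1 + ν) / 2) above_value_at_zero
  refine ⟨-4 * s, by linarith, ?_⟩
  rw [← hs_eq]
  congr 2 <;> ring
end

section
/- For every t > 0 and every κ ∈ ℝ, the series Σ_{m=1}^∞ m·(e^{−4t(m+κ)} − e^{−4tm}) converges and 2·Σ_{m=1}^∞ m·(e^{−4t(m+κ)} − e^{−4tm}) = −e^{−2κt}·sinh(2κt)/sinh²(2t). Moreover, for each fixed κ there exist constants C > 0 and t₀ > 0 such that |−e^{−2κt}·sinh(2κt)/sinh²(2t) + κ/(2t) − κ²| ≤ C·t for all t ∈ (0,t₀); i.e. the function admits the small-t expansion −(κ/2)·t^{−1} + κ² + O(t). -/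
open Set

/-!
With `q = exp (-4t)` the flux factors out of the series, leaving `∑ m q ^ m = q / (1 - q) ^ 2`,
which is `1 / (4 sinh² (2t))`. The closed form is minus the quotient of `2κt - 4κ²t² + O(t³)` by
`4t² + O(t⁴)`; since the denominator has no cubic term, the two leading Laurent coefficients of the
quotient are those of the numerator divided by `4`.
-/

open Asymptotics Filter Real Topology

theorem exists_forall_Ioo_norm_le_of_isBigO {α E F : Type*} [LinearOrder α] [TopologicalSpace α]
    [OrderTopology α] [NoMaxOrder α] [Norm E] [SeminormedAddCommGroup F] {f : α → E} {g : α → F}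
    {a : α} (h : f =O[𝓝[>] a] g) :
    ∃ C : ℝ, 0 < C ∧ ∃ b, a < b ∧ ∀ t ∈ Ioo a b, ‖f t‖ ≤ C * ‖g t‖ := by
  obtain ⟨C, hC, hbound⟩ := h.exists_pos
  exact ⟨C, hC, (nhdsGT_basis a).eventually_iff.1 hbound.bound⟩

theorem isBigO_div_sub_laurent {𝕜 : Type*} [NormedField 𝕜] {f g : 𝕜 → 𝕜} {a b c : 𝕜}
    (hc : c ≠ 0) (hf : (fun t ↦ f t - (a * t + b * t ^ 2)) =O[𝓝[≠] 0] (· ^ 3))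
    (hg : (fun t ↦ g t - c * t ^ 2) =O[𝓝[≠] 0] (· ^ 4)) :
    (fun t ↦ f t / g t - (a / (c * t) + b / c)) =O[𝓝[≠] 0] id := by
  have hne : ∀ᶠ t : 𝕜 in 𝓝[≠] 0, t ≠ 0 := eventually_mem_nhdsWithin
  have hg_equiv : g ~[𝓝[≠] 0] fun t ↦ c * t ^ 2 :=
    (hg.trans_isLittleO ((isLittleO_pow_pow (by norm_num : 2 < 4)).mono
      nhdsWithin_le_nhds)).trans_isBigO (isBigO_self_const_mul hc _ _)
  have sq_isBigO : (fun t ↦ t ^ 2) =O[𝓝[≠] 0] g :=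
    (isBigO_self_const_mul hc _ _).trans hg_equiv.isBigO_symm
  have hg_ne : ∀ᶠ t in 𝓝[≠] 0, g t ≠ 0 := by
    filter_upwards [sq_isBigO.eq_zero_imp, hne] with t hzero ht hgt
    exact pow_ne_zero 2 ht (hzero hgt)
  have inv_isBigO : (fun t ↦ (g t)⁻¹) =O[𝓝[≠] 0] fun t ↦ (t ^ 2)⁻¹ :=
    sq_isBigO.inv_rev (hne.mono fun t ht h ↦ absurd h (pow_ne_zero 2 ht))
  have pole_isBigO : (fun t ↦ (a + b * t) / c * t⁻¹) =O[𝓝[≠] 0] fun t ↦ t⁻¹ := by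
    have hcont : Tendsto (fun t ↦ (a + b * t) / c) (𝓝[≠] 0) (𝓝 ((a + b * 0) / c)) :=
      (Continuous.tendsto (by fun_prop) 0).mono_left nhdsWithin_le_nhds
    simpa using (hcont.isBigO_one 𝕜).mul (isBigO_refl (fun t : 𝕜 ↦ t⁻¹) _)
  have correction_isBigO :
      (fun t ↦ (a + b * t) / c * t⁻¹ * (g t - c * t ^ 2)) =O[𝓝[≠] 0] (· ^ 3) :=
    (pole_isBigO.mul hg).congr' .rfl (by filter_upwards [hne] with t ht; field_simp)
  -- With `p = (a + b * t) / (c * t)`,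
  -- `f / g - p = ((f - p * (c * t ^ 2)) - p * (g - c * t ^ 2)) / g`.
  refine ((hf.sub correction_isBigO).mul inv_isBigO).congr' ?_ ?_
  · filter_upwards [hne, hg_ne] with t ht hgt
    field_simp
    ring
  · filter_upwards [hne] with t ht
    simp only [id]
    field_simp

theorem exp_neg_mul_sinh (x : ℝ) : exp (-x) * sinh x = (1 - exp (-(2 * x))) / 2 := by
  have h_inv : exp (-x) * exp x = 1 := by rw [← exp_add, neg_add_cancel, exp_zero]
  have h_sq : exp (-(2 * x)) = exp (-x) * exp (-x) := by rw [← exp_add]; ring_nf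
  rw [sinh_eq, h_sq]
  linear_combination h_inv / 2

theorem exp_neg_div_one_sub_exp_neg_sq (x : ℝ) :
    exp (-(2 * x)) / (1 - exp (-(2 * x))) ^ 2 = 1 / (4 * sinh x ^ 2) := by
  have h_sub : 1 - exp (-(2 * x)) = exp (-x) * (2 * sinh x) := by
    linear_combination -2 * exp_neg_mul_sinh x
  have h_sq : exp (-(2 * x)) = exp (-x) ^ 2 := by rw [← exp_nat_mul]; push_cast; ring_nf
  rw [h_sub, mul_pow, h_sq, div_mul_eq_div_div, div_self (by positivity), mul_pow]
  norm_num

theorem isBigO_exp_neg_mul_sinh_sub :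
    (fun x ↦ exp (-x) * sinh x - (x - x ^ 2)) =O[𝓝 0] (· ^ 3) := by
  have h_exp := (exp_sub_sum_range_isBigO_pow 3).comp_tendsto
    (Continuous.tendsto' (by fun_prop : Continuous fun x : ℝ ↦ -(2 * x)) 0 0 (by simp))
  have h_cube : (fun x : ℝ ↦ (-(2 * x)) ^ 3) =O[𝓝 0] (· ^ 3) :=
    (isBigO_const_mul_self (-8) _ _).congr_left fun x ↦ by ring
  refine ((h_exp.trans h_cube).const_mul_left (-1 / 2)).congr_left fun x ↦ ?_
  simp only [Function.comp_apply, Finset.sum_range_succ, Finset.sum_range_zero, exp_neg_mul_sinh]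
  norm_num [Nat.factorial]
  ring

theorem isBigO_sinh_sub_id : (fun x ↦ sinh x - x) =O[𝓝 0] (· ^ 3) := by
  have h_exp := exp_sub_sum_range_isBigO_pow 3
  have h_exp_neg := (h_exp.comp_tendsto
    (Continuous.tendsto' continuous_neg (0 : ℝ) 0 neg_zero)).trans
      (isBigO_of_le (𝓝 0) (g := fun x : ℝ ↦ x ^ 3) fun x ↦ by simp)
  refine ((h_exp.sub h_exp_neg).const_mul_left (1 / 2)).congr_left fun x ↦ ?_
  simp only [Function.comp_apply, Finset.sum_range_succ, Finset.sum_range_zero, sinh_eq]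
  ring

theorem isBigO_sinh_sq_sub_sq : (fun x ↦ sinh x ^ 2 - x ^ 2) =O[𝓝 0] (· ^ 4) := by
  have h_add : (fun x ↦ sinh x + x) =O[𝓝 0] fun x ↦ x :=
    isEquivalent_sinh.isBigO.add (isBigO_refl _ _)
  exact (isBigO_sinh_sub_id.mul h_add).congr (fun x ↦ by ring) fun x ↦ by ring

theorem hasSum_succ_mul_exp_neg {x : ℝ} (hx : 0 < x) :
    HasSum (fun m : ℕ ↦ ((m : ℝ) + 1) * exp (-(2 * x) * ((m : ℝ) + 1)))
      (1 / (4 * sinh x ^ 2)) := by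
  have h_norm : ‖exp (-(2 * x))‖ < 1 := by
    rw [norm_of_nonneg (exp_nonneg _), exp_lt_one_iff]
    linarith
  have h_pow (m : ℕ) : exp (-(2 * x) * ((m : ℝ) + 1)) = exp (-(2 * x)) ^ (m + 1) := by
    rw [← exp_nat_mul, Nat.cast_succ, mul_comm]
  have h_geom := hasSum_coe_mul_geometric_of_norm_lt_one h_norm
  rw [← hasSum_nat_add_iff' 1] at h_geom
  simpa only [h_pow, exp_neg_div_one_sub_exp_neg_sq, Finset.sum_range_one, Nat.cast_add,
    Nat.cast_one, Nat.cast_zero, zero_mul, sub_zero] using h_geom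

theorem hasSum_succ_mul_exp_flux_sub (κ : ℝ) {t : ℝ} (ht : 0 < t) :
    HasSum (fun m : ℕ ↦ ((m : ℝ) + 1) *
        (exp (-(4 * t) * (((m : ℝ) + 1) + κ)) - exp (-(4 * t) * ((m : ℝ) + 1))))
      (-(exp (-(2 * κ * t)) * sinh (2 * κ * t) / sinh (2 * t) ^ 2) / 2) := by
  have h_term (m : ℕ) : ((m : ℝ) + 1) *
      (exp (-(4 * t) * (((m : ℝ) + 1) + κ)) - exp (-(4 * t) * ((m : ℝ) + 1))) =
        (exp (-(4 * t * κ)) - 1) *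
          (((m : ℝ) + 1) * exp (-(2 * (2 * t)) * ((m : ℝ) + 1))) := by
    have h_flux : exp (-(4 * t) * (((m : ℝ) + 1) + κ)) =
        exp (-(4 * t * κ)) * exp (-(4 * t) * ((m : ℝ) + 1)) := by
      rw [← exp_add]
      ring_nf
    rw [h_flux, show 2 * (2 * t) = 4 * t by ring]
    ring
  have h_value : -(exp (-(2 * κ * t)) * sinh (2 * κ * t) / sinh (2 * t) ^ 2) / 2 =
      (exp (-(4 * t * κ)) - 1) * (1 / (4 * sinh (2 * t) ^ 2)) := by
    rw [exp_neg_mul_sinh, show 2 * (2 * κ * t) = 4 * t * κ by ring]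
    ring
  rw [h_value]
  exact ((hasSum_succ_mul_exp_neg (mul_pos two_pos ht)).mul_left _).congr_fun h_term

theorem isBigO_heatTrace_sub_laurent (κ : ℝ) :
    (fun t ↦ -(exp (-(2 * κ * t)) * sinh (2 * κ * t) / sinh (2 * t) ^ 2) + κ / (2 * t) - κ ^ 2)
      =O[𝓝[≠] 0] id := by
  have tendsto_mul (c : ℝ) : Tendsto (fun t ↦ c * t) (𝓝[≠] 0) (𝓝 0) :=
    (Continuous.tendsto' (by fun_prop) 0 0 (mul_zero c)).mono_left nhdsWithin_le_nhds
  have pow_isBigO (c : ℝ) (n : ℕ) : (fun t ↦ (c * t) ^ n) =O[𝓝[≠] 0] (· ^ n) :=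
    (isBigO_const_mul_self (c ^ n) _ _).congr_left fun t ↦ (mul_pow c t n).symm
  have h_num : (fun t ↦ exp (-(2 * κ * t)) * sinh (2 * κ * t) -
      (2 * κ * t + -(4 * κ ^ 2) * t ^ 2)) =O[𝓝[≠] 0] (· ^ 3) :=
    ((isBigO_exp_neg_mul_sinh_sub.comp_tendsto (tendsto_mul (2 * κ))).trans
      (pow_isBigO (2 * κ) 3)).congr_left fun t ↦ by simp only [Function.comp_apply]; ring
  have h_den : (fun t ↦ sinh (2 * t) ^ 2 - 4 * t ^ 2) =O[𝓝[≠] 0] (· ^ 4) :=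
    ((isBigO_sinh_sq_sub_sq.comp_tendsto (tendsto_mul 2)).trans
      (pow_isBigO 2 4)).congr_left fun t ↦ by simp only [Function.comp_apply]; ring
  refine (isBigO_div_sub_laurent four_ne_zero h_num h_den).neg_left.congr_left fun t ↦ ?_
  ring

theorem statement17 (κ : ℝ) :
    (∀ t : ℝ, 0 < t → ∃ S : ℝ,
      HasSum (fun m : ℕ =>
        ((m : ℝ) + 1) *
          (Real.exp (-(4 * t) * (((m : ℝ) + 1) + κ)) - Real.exp (-(4 * t) * ((m : ℝ) + 1)))) S ∧
      2 * S = -(Real.exp (-(2 * κ * t)) * Real.sinh (2 * κ * t) / Real.sinh (2 * t) ^ 2)) ∧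
    ∃ C : ℝ, 0 < C ∧ ∃ t₀ : ℝ, 0 < t₀ ∧ ∀ t ∈ Ioo (0:ℝ) t₀,
      |(-(Real.exp (-(2 * κ * t)) * Real.sinh (2 * κ * t) / Real.sinh (2 * t) ^ 2)) +
          κ / (2 * t) - κ ^ 2| ≤ C * t := by
  refine ⟨fun t ht ↦ ⟨_, hasSum_succ_mul_exp_flux_sub κ ht, mul_div_cancel₀ _ two_ne_zero⟩, ?_⟩
  have h_right := (isBigO_heatTrace_sub_laurent κ).mono (nhdsGT_le_nhdsNE 0)
  obtain ⟨C, hC, t₀, ht₀, hbound⟩ := exists_forall_Ioo_norm_le_of_isBigO h_right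
  refine ⟨C, hC, t₀, ht₀, fun t ht ↦ ?_⟩
  simpa only [id, norm_eq_abs, abs_of_pos ht.1] using hbound t ht
end

section
/- Let 0 < ε < 1/√2 and, for t ∈ (0, π/2), define ψ_t : [0, επ/2) → ℝ by ψ_t(x) = exp(−ε·tan(x/ε)/tan(t/2)). Then: (i) ∫₀^{επ/2} ψ_t(x)² dx ≤ tan(t/2)/2, so this integral tends to 0 as t → 0⁺; and (ii) the improper integral ∫₀^{επ/2} ψ_t(x)·(−ψ_t''(x)) dx converges and the quotient (∫₀^{επ/2} ψ_t(x)·(−ψ_t''(x)) dx) / (∫₀^{επ/2} ψ_t(x)² dx) tends to −∞ as t → 0⁺. -/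
open MeasureTheory Set Filter Topology Real

/-- The boundary state `ψ_t(x) = exp(-ε·tan(x/ε)/tan(t/2))`. -/
noncomputable def boundaryState (ε t x : ℝ) : ℝ :=
  Real.exp (-(ε * Real.tan (x / ε) / Real.tan (t / 2)))

/-!
Put `τ = tan (t / 2)` and substitute `y = tan (x / ε)`, so that `dx = ε / (1 + y²) dy` and `y` runs
over `(0, ∞)`. The squared norm of `ψ_t` becomes `∫ ε / (1 + y²) · exp (-2εy/τ) dy`, which is at
most `∫ ε · exp (-2εy/τ) dy = τ / 2`. The Jacobian cancels one of the factors `1 + y²` of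
`ψ_t · (-ψ_t'')`, so the energy integral is a combination of exponential moments and equals
`τ / (4ε²) - 1 / (2τ)`. Once this is negative, dividing it by a squared norm of at most `τ / 2`
gives a quotient of at most `1 / (2ε²) - 1 / τ²`, which tends to `-∞` as `τ → 0⁺`.
-/

section ChangeOfVariables

variable {E : Type*} [NormedAddCommGroup E] [NormedSpace ℝ E] {ε : ℝ}

theorem image_const_mul_arctan_Ioi_zero (hε : 0 < ε) :
    (fun y => ε * arctan y) '' Ioi 0 = Ioo 0 (ε * π / 2) := by
  have image_arctan : arctan '' Ioi 0 = Ioo 0 (π / 2) := by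
    ext x
    constructor
    · rintro ⟨y, hy, rfl⟩
      exact ⟨arctan_pos.2 hy, arctan_lt_pi_div_two y⟩
    · rintro ⟨hx₀, hx₁⟩
      exact ⟨tan x, tan_pos_of_pos_of_lt_pi_div_two hx₀ hx₁,
        arctan_tan (by linarith [pi_pos]) hx₁⟩
  rw [← image_image (ε * ·) arctan, image_arctan, image_mul_left_Ioo hε, mul_zero, mul_div_assoc]

theorem hasDerivAt_const_mul_arctan (ε y : ℝ) :
    HasDerivAt (fun y => ε * arctan y) (ε / (1 + y ^ 2)) y := by
  simpa only [mul_one_div] using (hasDerivAt_arctan y).const_mul ε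

theorem monotone_const_mul_arctan (hε : 0 ≤ ε) : Monotone fun y => ε * arctan y :=
  arctan_mono.const_mul hε

theorem integrableOn_comp_tan_div_iff (hε : 0 < ε) (g : ℝ → E) :
    IntegrableOn (fun x => g (tan (x / ε))) (Ioo 0 (ε * π / 2)) ↔
      IntegrableOn (fun y => (ε / (1 + y ^ 2)) • g y) (Ioi 0) := by
  rw [← image_const_mul_arctan_Ioi_zero hε,
    integrableOn_image_iff_integrableOn_deriv_smul_of_monotoneOn measurableSet_Ioi
      (fun y _ => (hasDerivAt_const_mul_arctan ε y).hasDerivWithinAt)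
      ((monotone_const_mul_arctan hε.le).monotoneOn _)]
  simp only [mul_div_cancel_left₀ _ hε.ne', tan_arctan]

theorem integral_comp_tan_div (hε : 0 < ε) (g : ℝ → E) :
    ∫ x in Ioo 0 (ε * π / 2), g (tan (x / ε)) = ∫ y in Ioi 0, (ε / (1 + y ^ 2)) • g y := by
  rw [← image_const_mul_arctan_Ioi_zero hε,
    integral_image_eq_integral_deriv_smul_of_monotoneOn measurableSet_Ioi
      (fun y _ => (hasDerivAt_const_mul_arctan ε y).hasDerivWithinAt)
      ((monotone_const_mul_arctan hε.le).monotoneOn _)]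
  simp only [mul_div_cancel_left₀ _ hε.ne', tan_arctan]

end ChangeOfVariables

section ExponentialMoments

variable {r : ℝ}

theorem integrableOn_exp_neg_mul_Ioi (hr : 0 < r) (c : ℝ) :
    IntegrableOn (fun y => exp (-(r * y))) (Ioi c) := by
  simpa only [neg_mul] using integrableOn_exp_mul_Ioi (neg_neg_of_pos hr) c

theorem integral_exp_neg_mul_Ioi (hr : 0 < r) (c : ℝ) :
    ∫ y in Ioi c, exp (-(r * y)) = exp (-(r * c)) / r := by
  simpa only [neg_mul, neg_div_neg_eq] using integral_exp_mul_Ioi (neg_neg_of_pos hr) c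

theorem integrableOn_pow_mul_exp_neg_mul_Ioi (n : ℕ) (hr : 0 < r) :
    IntegrableOn (fun y => y ^ n * exp (-(r * y))) (Ioi 0) := by
  have hn : (-1 : ℝ) < n := neg_one_lt_zero.trans_le n.cast_nonneg
  simpa only [rpow_natCast, rpow_one, neg_mul] using
    integrableOn_rpow_mul_exp_neg_mul_rpow hn one_pos hr

theorem integral_pow_mul_exp_neg_mul_Ioi (n : ℕ) (hr : 0 < r) :
    ∫ y in Ioi 0, y ^ n * exp (-(r * y)) = n.factorial / r ^ (n + 1) := by
  have h := integral_rpow_mul_exp_neg_mul_Ioi (n.cast_add_one_pos (α := ℝ)) hr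
  rw [Gamma_nat_eq_factorial, ← Nat.cast_add_one, rpow_natCast] at h
  simpa only [Nat.cast_add_one, add_sub_cancel_right, rpow_natCast, one_div, inv_pow,
    inv_mul_eq_div] using h

theorem integrableOn_quadratic_mul_exp_neg_mul_Ioi (a b c : ℝ) (hr : 0 < r) :
    IntegrableOn (fun y => (a + b * y + c * y ^ 2) * exp (-(r * y))) (Ioi 0) := by
  have term_integrable (k : ℝ) (n : ℕ) :=
    (integrableOn_pow_mul_exp_neg_mul_Ioi n hr).const_mul k
  refine (((term_integrable a 0).fun_add (term_integrable b 1)).fun_add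
    (term_integrable c 2)).congr (.of_forall fun y => ?_)
  ring

theorem integral_quadratic_mul_exp_neg_mul_Ioi (a b c : ℝ) (hr : 0 < r) :
    ∫ y in Ioi 0, (a + b * y + c * y ^ 2) * exp (-(r * y)) =
      a / r + b / r ^ 2 + 2 * c / r ^ 3 := by
  have term_integrable (k : ℝ) (n : ℕ) :=
    (integrableOn_pow_mul_exp_neg_mul_Ioi n hr).const_mul k
  calc ∫ y in Ioi 0, (a + b * y + c * y ^ 2) * exp (-(r * y))
      = ∫ y in Ioi 0, (a * (y ^ 0 * exp (-(r * y))) + b * (y ^ 1 * exp (-(r * y)))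
          + c * (y ^ 2 * exp (-(r * y)))) := by
        congr with y
        ring
    _ = a * ((0).factorial / r ^ 1) + b * ((1).factorial / r ^ 2)
          + c * ((2).factorial / r ^ 3) := by
        rw [integral_add ((term_integrable a 0).fun_add (term_integrable b 1))
            (term_integrable c 2),
          integral_add (term_integrable a 0) (term_integrable b 1)]
        simp only [integral_const_mul, integral_pow_mul_exp_neg_mul_Ioi _ hr]
    _ = a / r + b / r ^ 2 + 2 * c / r ^ 3 := by
        simp only [Nat.factorial]
        push_cast
        ring

end ExponentialMoments

section Derivatives

variable {ε t x : ℝ}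

theorem hasDerivAt_tan_div (hx : cos (x / ε) ≠ 0) :
    HasDerivAt (fun x => tan (x / ε)) ((1 + tan (x / ε) ^ 2) / ε) x := by
  convert! (hasDerivAt_tan hx).comp x ((hasDerivAt_id x).div_const ε) using 1
  rw [← inv_one_add_tan_sq hx, one_div, inv_inv, mul_one_div]

theorem hasDerivAt_boundaryState (hε : ε ≠ 0) (hx : cos (x / ε) ≠ 0) :
    HasDerivAt (boundaryState ε t)
      (-((1 + tan (x / ε) ^ 2) / tan (t / 2)) * boundaryState ε t x) x := by
  refine (((hasDerivAt_tan_div hx).const_mul ε).div_const (tan (t / 2))).neg.exp.congr_deriv ?_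
  rw [mul_div_cancel₀ _ hε, mul_comm]
  rfl

theorem deriv_deriv_boundaryState (hε : ε ≠ 0) (hx : cos (x / ε) ≠ 0) :
    deriv (deriv (boundaryState ε t)) x =
      ((1 + tan (x / ε) ^ 2) ^ 2 / tan (t / 2) ^ 2 -
        2 * tan (x / ε) * (1 + tan (x / ε) ^ 2) / (ε * tan (t / 2))) * boundaryState ε t x := by
  have deriv_eq : deriv (boundaryState ε t) =ᶠ[𝓝 x]
      fun x => -((1 + tan (x / ε) ^ 2) / tan (t / 2)) * boundaryState ε t x := by
    have cos_ne : ∀ᶠ y in 𝓝 x, cos (y / ε) ≠ 0 :=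
      (continuous_cos.comp (continuous_id.div_const ε)).continuousAt.eventually_ne hx
    filter_upwards [cos_ne] with y hy using (hasDerivAt_boundaryState hε hy).deriv
  have deriv_factor : HasDerivAt (fun x => -((1 + tan (x / ε) ^ 2) / tan (t / 2)))
      (-(2 * tan (x / ε) * ((1 + tan (x / ε) ^ 2) / ε) / tan (t / 2))) x := by
    simpa using ((((hasDerivAt_tan_div hx).fun_pow 2).const_add 1).div_const (tan (t / 2))).fun_neg
  rw [deriv_eq.deriv_eq, (deriv_factor.fun_mul (hasDerivAt_boundaryState hε hx)).deriv]
  ring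

end Derivatives

section Norm

variable {ε t r : ℝ}

theorem div_one_add_sq_mul_exp_le (hε : 0 ≤ ε) (r y : ℝ) :
    ε / (1 + y ^ 2) * exp (-(r * y)) ≤ ε * exp (-(r * y)) :=
  mul_le_mul_of_nonneg_right (div_le_self hε (by nlinarith)) (exp_pos _).le

theorem integrableOn_div_one_add_sq_mul_exp (hε : 0 ≤ ε) (hr : 0 < r) :
    IntegrableOn (fun y => ε / (1 + y ^ 2) * exp (-(r * y))) (Ioi 0) := by
  have continuous_integrand : Continuous fun y : ℝ => ε / (1 + y ^ 2) * exp (-(r * y)) := by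
    fun_prop (disch := intros; positivity)
  refine Integrable.mono' ((integrableOn_exp_neg_mul_Ioi hr 0).const_mul ε)
    continuous_integrand.aestronglyMeasurable (.of_forall fun y => ?_)
  rw [norm_of_nonneg (by positivity)]
  exact div_one_add_sq_mul_exp_le hε r y

theorem boundaryState_sq (ε t x : ℝ) :
    boundaryState ε t x ^ 2 = exp (-(2 * ε / tan (t / 2) * tan (x / ε))) := by
  rw [boundaryState, ← exp_nat_mul]
  congr 1
  push_cast
  ring

theorem integrableOn_boundaryState_sq (hε : 0 < ε) (ht : 0 < tan (t / 2)) :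
    IntegrableOn (fun x => boundaryState ε t x ^ 2) (Ioo 0 (ε * π / 2)) := by
  simp only [boundaryState_sq]
  rw [integrableOn_comp_tan_div_iff hε fun y => exp (-(2 * ε / tan (t / 2) * y))]
  exact integrableOn_div_one_add_sq_mul_exp hε.le (by positivity)

theorem integral_boundaryState_sq_pos (hε : 0 < ε) (ht : 0 < tan (t / 2)) :
    0 < ∫ x in Ioo 0 (ε * π / 2), boundaryState ε t x ^ 2 := by
  have : NeZero (volume.restrict (Ioo 0 (ε * π / 2))) := by
    refine ⟨?_⟩
    rw [Ne, Measure.restrict_eq_zero, volume_Ioo, sub_zero, ENNReal.ofReal_eq_zero, not_le]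
    positivity
  have integrable := integrableOn_boundaryState_sq hε ht
  simp only [boundaryState_sq] at integrable ⊢
  exact integral_exp_pos integrable

theorem integral_boundaryState_sq_le (hε : 0 < ε) (ht : 0 < tan (t / 2)) :
    ∫ x in Ioo 0 (ε * π / 2), boundaryState ε t x ^ 2 ≤ tan (t / 2) / 2 := by
  have hr : 0 < 2 * ε / tan (t / 2) := by positivity
  calc ∫ x in Ioo 0 (ε * π / 2), boundaryState ε t x ^ 2
      = ∫ y in Ioi 0, ε / (1 + y ^ 2) * exp (-(2 * ε / tan (t / 2) * y)) := by
        simp only [boundaryState_sq]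
        exact integral_comp_tan_div hε fun y => exp (-(2 * ε / tan (t / 2) * y))
    _ ≤ ∫ y in Ioi 0, ε * exp (-(2 * ε / tan (t / 2) * y)) :=
        integral_mono (integrableOn_div_one_add_sq_mul_exp hε.le hr)
          ((integrableOn_exp_neg_mul_Ioi hr 0).const_mul ε)
          (div_one_add_sq_mul_exp_le hε.le _)
    _ = ε * (1 / (2 * ε / tan (t / 2))) := by
        rw [integral_const_mul, integral_exp_neg_mul_Ioi hr, mul_zero, neg_zero, exp_zero]
    _ = tan (t / 2) / 2 := by field_simp

end Norm

section Energy

variable {ε t x : ℝ}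

/-- The energy density `ψ_t · (-ψ_t'')` of the boundary state as a function of the variable
`y = tan (x / ε)`. -/
noncomputable def energyDensity (ε t y : ℝ) : ℝ :=
  (2 * y * (1 + y ^ 2) / (ε * tan (t / 2)) - (1 + y ^ 2) ^ 2 / tan (t / 2) ^ 2) *
    exp (-(2 * ε / tan (t / 2) * y))

theorem boundaryState_mul_neg_deriv_deriv (hε : ε ≠ 0) (hx : cos (x / ε) ≠ 0) :
    boundaryState ε t x * -deriv (deriv (boundaryState ε t)) x =
      energyDensity ε t (tan (x / ε)) := by
  rw [deriv_deriv_boundaryState hε hx, energyDensity, ← boundaryState_sq]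
  ring

theorem eqOn_boundaryState_mul_neg_deriv_deriv (hε : 0 < ε) :
    EqOn (fun x => boundaryState ε t x * -deriv (deriv (boundaryState ε t)) x)
      (fun x => energyDensity ε t (tan (x / ε))) (Ioo 0 (ε * π / 2)) := by
  rintro x ⟨hx₀, hx₁⟩
  have lower : -(π / 2) < x / ε := by linarith [pi_pos, div_pos hx₀ hε]
  have upper : x / ε < π / 2 := by rw [div_lt_iff₀ hε]; linarith
  exact boundaryState_mul_neg_deriv_deriv hε.ne' (cos_pos_of_mem_Ioo ⟨lower, upper⟩).ne'

theorem div_one_add_sq_mul_energyDensity (hε : ε ≠ 0) (t y : ℝ) :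
    ε / (1 + y ^ 2) * energyDensity ε t y =
      (-ε / tan (t / 2) ^ 2 + 2 / tan (t / 2) * y + -ε / tan (t / 2) ^ 2 * y ^ 2) *
        exp (-(2 * ε / tan (t / 2) * y)) := by
  have : 1 + y ^ 2 ≠ 0 := by positivity
  rw [energyDensity]
  field_simp
  ring

theorem integrableOn_boundaryState_mul_neg_deriv_deriv (hε : 0 < ε) (ht : 0 < tan (t / 2)) :
    IntegrableOn (fun x => boundaryState ε t x * -deriv (deriv (boundaryState ε t)) x)
      (Ioo 0 (ε * π / 2)) := by
  rw [integrableOn_congr_fun (eqOn_boundaryState_mul_neg_deriv_deriv hε) measurableSet_Ioo,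
    integrableOn_comp_tan_div_iff hε]
  simp only [smul_eq_mul, div_one_add_sq_mul_energyDensity hε.ne']
  exact integrableOn_quadratic_mul_exp_neg_mul_Ioi _ _ _ (by positivity)

theorem integral_boundaryState_mul_neg_deriv_deriv (hε : 0 < ε) (ht : 0 < tan (t / 2)) :
    ∫ x in Ioo 0 (ε * π / 2), boundaryState ε t x * -deriv (deriv (boundaryState ε t)) x =
      tan (t / 2) / (4 * ε ^ 2) - 1 / (2 * tan (t / 2)) := by
  rw [setIntegral_congr_fun measurableSet_Ioo (eqOn_boundaryState_mul_neg_deriv_deriv hε),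
    integral_comp_tan_div hε]
  simp only [smul_eq_mul, div_one_add_sq_mul_energyDensity hε.ne']
  rw [integral_quadratic_mul_exp_neg_mul_Ioi _ _ _ (by positivity)]
  field_simp
  ring

theorem boundaryState_energy_quotient_le (hε : 0 < ε) (ht : 0 < tan (t / 2))
    (htε : tan (t / 2) ^ 2 ≤ 2 * ε ^ 2) :
    (∫ x in Ioo 0 (ε * π / 2), boundaryState ε t x * -deriv (deriv (boundaryState ε t)) x) /
        (∫ x in Ioo 0 (ε * π / 2), boundaryState ε t x ^ 2) ≤
      1 / (2 * ε ^ 2) - 1 / tan (t / 2) ^ 2 := by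
  have bound_nonpos : 1 / (2 * ε ^ 2) - 1 / tan (t / 2) ^ 2 ≤ 0 :=
    sub_nonpos.2 (one_div_le_one_div_of_le (by positivity) htε)
  rw [div_le_iff₀ (integral_boundaryState_sq_pos hε ht),
    integral_boundaryState_mul_neg_deriv_deriv hε ht]
  calc tan (t / 2) / (4 * ε ^ 2) - 1 / (2 * tan (t / 2))
      = (1 / (2 * ε ^ 2) - 1 / tan (t / 2) ^ 2) * (tan (t / 2) / 2) := by
        field_simp
        ring
    _ ≤ _ := mul_le_mul_of_nonpos_left (integral_boundaryState_sq_le hε ht) bound_nonpos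

end Energy

theorem tan_half_pos {t : ℝ} (ht : t ∈ Ioo 0 π) : 0 < tan (t / 2) :=
  tan_pos_of_pos_of_lt_pi_div_two (half_pos ht.1) (div_lt_div_of_pos_right ht.2 two_pos)

theorem tendsto_tan_half_nhdsGT_zero :
    Tendsto (fun t => tan (t / 2)) (𝓝[>] 0) (𝓝[>] 0) := by
  refine tendsto_nhdsWithin_iff.2 ⟨?_, ?_⟩
  · have continuousAt_zero : ContinuousAt (fun t => tan (t / 2)) 0 :=
      (hasDerivAt_tan_div (by simp)).continuousAt
    simpa using continuousAt_zero.tendsto.mono_left nhdsWithin_le_nhds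
  · filter_upwards [Ioo_mem_nhdsGT pi_pos] with t ht using tan_half_pos ht

theorem tendsto_const_sub_one_div_tan_half_sq (c : ℝ) :
    Tendsto (fun t => c - 1 / tan (t / 2) ^ 2) (𝓝[>] 0) atBot := by
  have inv_sq_tendsto : Tendsto (fun t => 1 / tan (t / 2) ^ 2) (𝓝[>] 0) atTop :=
    ((tendsto_pow_atTop two_ne_zero).comp
      (tendsto_inv_nhdsGT_zero.comp tendsto_tan_half_nhdsGT_zero)).congr fun t => by
        simp only [Function.comp_apply, inv_pow, one_div]
  simpa only [sub_eq_add_neg, Function.comp_def] using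
    tendsto_atBot_add_const_left _ c (tendsto_neg_atTop_atBot.comp inv_sq_tendsto)

theorem statement19_general (ε : ℝ) (hε : 0 < ε) :
    (∀ t ∈ Ioo (0:ℝ) π,
      (∫ x in Ioo (0:ℝ) (ε * π / 2), boundaryState ε t x ^ 2) ≤ tan (t / 2) / 2) ∧
    Tendsto (fun t => ∫ x in Ioo (0:ℝ) (ε * π / 2), boundaryState ε t x ^ 2)
      (𝓝[>] 0) (𝓝 0) ∧
    (∀ t ∈ Ioo (0:ℝ) π,
      IntegrableOn
        (fun x => boundaryState ε t x * (-(deriv (deriv (boundaryState ε t)) x)))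
        (Ioo (0:ℝ) (ε * π / 2))) ∧
    Tendsto
      (fun t =>
        (∫ x in Ioo (0:ℝ) (ε * π / 2),
          boundaryState ε t x * (-(deriv (deriv (boundaryState ε t)) x))) /
        (∫ x in Ioo (0:ℝ) (ε * π / 2), boundaryState ε t x ^ 2))
      (𝓝[>] 0) atBot := by
  have norm_le (t : ℝ) (ht : t ∈ Ioo 0 π) := integral_boundaryState_sq_le hε (tan_half_pos ht)
  have near_zero : ∀ᶠ t in 𝓝[>] (0:ℝ), t ∈ Ioo 0 π := Ioo_mem_nhdsGT pi_pos
  have tan_small : ∀ᶠ t in 𝓝[>] (0:ℝ), tan (t / 2) ∈ Ioc 0 ε :=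
    tendsto_tan_half_nhdsGT_zero (Ioc_mem_nhdsGT hε)
  refine ⟨norm_le, ?_, fun t ht =>
    integrableOn_boundaryState_mul_neg_deriv_deriv hε (tan_half_pos ht), ?_⟩
  · have bound_tendsto : Tendsto (fun t => tan (t / 2) / 2) (𝓝[>] 0) (𝓝 0) := by
      simpa using (tendsto_tan_half_nhdsGT_zero.mono_right nhdsWithin_le_nhds).div_const 2
    exact squeeze_zero' (.of_forall fun t => integral_nonneg fun x => sq_nonneg _)
      (near_zero.mono norm_le) bound_tendsto
  · refine tendsto_atBot_mono' _ ?_ (tendsto_const_sub_one_div_tan_half_sq (1 / (2 * ε ^ 2)))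
    filter_upwards [tan_small] with t ⟨tan_pos, tan_le⟩
    exact boundaryState_energy_quotient_le hε tan_pos (by nlinarith)

theorem statement19 (ε : ℝ) (hε0 : 0 < ε) (hε1 : ε < 1 / Real.sqrt 2) :
    (∀ t ∈ Ioo (0:ℝ) (π / 2),
      (∫ x in Ioo (0:ℝ) (ε * π / 2), boundaryState ε t x ^ 2) ≤ Real.tan (t / 2) / 2) ∧
    Tendsto (fun t => ∫ x in Ioo (0:ℝ) (ε * π / 2), boundaryState ε t x ^ 2)
      (𝓝[>] 0) (𝓝 0) ∧
    (∀ t ∈ Ioo (0:ℝ) (π / 2),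
      IntegrableOn
        (fun x => boundaryState ε t x * (-(deriv (deriv (boundaryState ε t)) x)))
        (Ioo (0:ℝ) (ε * π / 2))) ∧
    Tendsto
      (fun t =>
        (∫ x in Ioo (0:ℝ) (ε * π / 2),
          boundaryState ε t x * (-(deriv (deriv (boundaryState ε t)) x))) /
        (∫ x in Ioo (0:ℝ) (ε * π / 2), boundaryState ε t x ^ 2))
      (𝓝[>] 0) atBot := by
  have subset : Ioo 0 (π / 2) ⊆ Ioo 0 π := Ioo_subset_Ioo_right (half_le_self pi_pos.le)
  obtain ⟨norm_le, norm_tendsto, integrable, quotient_tendsto⟩ := statement19_general ε hε0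
  exact ⟨fun t ht => norm_le t (subset ht), norm_tendsto,
    fun t ht => integrable t (subset ht), quotient_tendsto⟩
end
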